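/- arXiv:2311.09464 — 2 statements merged into one kernel-verified Lean document; each statement's English description precedes it below -/
import Mathlib

section
/- Assume the Riemann hypothesis. Then for every real x ≥ 1, |ψ₁(x) − x²/2| ≤ (4 + γ)·x^{3/2}; in particular |ψ₁(x) − x²/2| < 5·x^{3/2}. -/
/-- The Riemann hypothesis: every nontrivial zero of ζ (a zero with real part strictly
between 0 and 1) has real part 1/2. -/
def RH : Prop := ∀ s : ℂ, riemannZeta s = 0 → 0 < s.re → s.re < 1 → s.re = 1 / 2

/-- The Chebyshev psi function ψ(x) = ∑_{m ≤ x} Λ(m). -/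
noncomputable def chebyshevPsi (x : ℝ) : ℝ :=
  ∑ m ∈ Finset.Icc 1 ⌊x⌋₊, ArithmeticFunction.vonMangoldt m

/-- ψ₁(x) = ∫₁ˣ ψ(u) du. -/
noncomputable def chebyshevPsi1 (x : ℝ) : ℝ := ∫ u in (1:ℝ)..x, chebyshevPsi u

/-!
Write `Z(s) = (s - 1) ζ(s)` and `P(s) = ((Γ'/Γ)(1 + s/2) + γ) / 2`, so that
`Z'/Z = ξ'/ξ - P + (γ + log π) / 2`. Both `ξ'/ξ` and `P` have nonnegative real part on `Re s > 1/2`: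
for `P` this is visible from its series, and for `ξ'/ξ` the Phragmén–Lindelöf principle, applied
under RH to `ξ(s - δ) / ξ(s + δ)`, which has modulus one on the critical line by the functional
equation, gives `|ξ(s - δ)| ≤ |ξ(s + δ)|`.

Perron's formula expresses `(x - 1)² / 2 - ψ₁(x)` as the integral of `Z'/Z` against
`w(s) = x^(s+1) / (s (s + 1))` over a line `Re s = σ > 1/2`. If `Re K ≥ 0`, the integral of `K w`
is estimated without loss of a logarithm: on the line `conj w` is the restriction of a meromorphic
function, so `∫ K conj w` is a sum of two residues, while `∫ Re K · 2 Re w` is bounded by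
`x^(σ+1) / σ` times a Poisson integral that evaluates `Re K` at `2 σ`. Taking `K = ξ'/ξ` and
`K = P` and letting `σ → 1/2` leaves only the values of these functions at `1` and `2`.
-/

section

open Complex Filter Topology MeasureTheory Asymptotics ComplexConjugate

/-- The functions to which contour shifts apply: `f` is holomorphic at every point whose real part
lies in `J`, and `f s = O((1 + ‖s‖) ^ α)` there. Half-planes are `J = Set.Ici σ`, closed strips are
`J = Set.Icc σ₁ σ₂` and vertical lines are `J = {σ}`. -/
structure HolomorphicWithGrowth (f : ℂ → ℂ) (J : Set ℝ) (α : ℝ) : Prop where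
  differentiableAt : ∀ {s : ℂ}, s.re ∈ J → DifferentiableAt ℂ f s
  isBigO : f =O[𝓟 (re ⁻¹' J)] fun s => (1 + ‖s‖) ^ α

namespace HolomorphicWithGrowth

variable {f g : ℂ → ℂ} {J J' : Set ℝ} {α β σ σ₁ σ₂ : ℝ} {a c : ℂ}

theorem of_norm_le {C : ℝ} (hf : ∀ {s : ℂ}, s.re ∈ J → DifferentiableAt ℂ f s)
    (hC : ∀ {s : ℂ}, s.re ∈ J → ‖f s‖ ≤ C * (1 + ‖s‖) ^ α) : HolomorphicWithGrowth f J α :=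
  ⟨hf, isBigO_principal.2 ⟨C, fun s hs => by
    rw [Real.norm_of_nonneg (by positivity)]; exact hC hs⟩⟩

theorem exists_bound (hf : HolomorphicWithGrowth f J α) :
    ∃ C, 0 < C ∧ ∀ s : ℂ, s.re ∈ J → ‖f s‖ ≤ C * (1 + ‖s‖) ^ α := by
  obtain ⟨C, hC, h⟩ := hf.isBigO.exists_pos
  refine ⟨C, hC, fun s hs => (isBigOWith_principal.1 h s hs).trans_eq ?_⟩
  rw [Real.norm_of_nonneg (by positivity)]

theorem mono_set (hf : HolomorphicWithGrowth f J α) (h : J' ⊆ J) : HolomorphicWithGrowth f J' α :=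
  ⟨fun hs => hf.differentiableAt (h hs),
    hf.isBigO.mono (principal_mono.2 (Set.preimage_mono h))⟩

theorem mono_exponent (hf : HolomorphicWithGrowth f J α) (h : α ≤ β) :
    HolomorphicWithGrowth f J β := by
  refine ⟨hf.differentiableAt, hf.isBigO.trans (isBigO_of_le _ fun s => ?_)⟩
  rw [Real.norm_of_nonneg (by positivity), Real.norm_of_nonneg (by positivity)]
  exact Real.rpow_le_rpow_of_exponent_le (by linarith [norm_nonneg s]) h

theorem congr (hf : HolomorphicWithGrowth f J α) (h : ∀ {s : ℂ}, s.re ∈ J → g =ᶠ[𝓝 s] f) :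
    HolomorphicWithGrowth g J α :=
  ⟨fun hs => (hf.differentiableAt hs).congr_of_eventuallyEq (h hs),
    hf.isBigO.congr' (eventually_principal.2 fun _ hs => (h hs).eq_of_nhds.symm) .rfl⟩

theorem add (hf : HolomorphicWithGrowth f J α) (hg : HolomorphicWithGrowth g J α) :
    HolomorphicWithGrowth (fun s => f s + g s) J α :=
  ⟨fun hs => (hf.differentiableAt hs).add (hg.differentiableAt hs), hf.isBigO.add hg.isBigO⟩

theorem sub (hf : HolomorphicWithGrowth f J α) (hg : HolomorphicWithGrowth g J α) :
    HolomorphicWithGrowth (fun s => f s - g s) J α :=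
  ⟨fun hs => (hf.differentiableAt hs).sub (hg.differentiableAt hs), hf.isBigO.sub hg.isBigO⟩

theorem mul (hf : HolomorphicWithGrowth f J α) (hg : HolomorphicWithGrowth g J β) :
    HolomorphicWithGrowth (fun s => f s * g s) J (α + β) := by
  refine ⟨fun hs => (hf.differentiableAt hs).mul (hg.differentiableAt hs),
    (hf.isBigO.mul hg.isBigO).congr_right fun s => ?_⟩
  rw [← Real.rpow_add (by positivity)]

theorem const_mul (hf : HolomorphicWithGrowth f J α) (c : ℂ) :
    HolomorphicWithGrowth (fun s => c * f s) J α :=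
  ⟨fun hs => (hf.differentiableAt hs).const_mul c, hf.isBigO.const_mul_left c⟩

theorem const (c : ℂ) : HolomorphicWithGrowth (fun _ => c) J 0 :=
  of_norm_le (C := ‖c‖) (fun _ => differentiableAt_const c) (by simp)

theorem pow (hf : HolomorphicWithGrowth f J α) (n : ℕ) :
    HolomorphicWithGrowth (fun s => f s ^ n) J (n * α) := by
  induction n with
  | zero => simpa using const 1
  | succ n ih => simpa [pow_succ, add_mul] using ih.mul hf

theorem comp_mul_add (hf : HolomorphicWithGrowth f J α) (hα : 0 ≤ α) (r c : ℝ)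
    (h : ∀ x ∈ J', r * x + c ∈ J) : HolomorphicWithGrowth (fun s => f (r * s + c)) J' α := by
  obtain ⟨C, hC, hbound⟩ := hf.exists_bound
  refine of_norm_le (C := C * (1 + |r| + |c|) ^ α) (fun {s} hs => ?_) fun {s} hs => ?_
  · have := hf.differentiableAt (s := r * s + c) (by simpa using h _ hs)
    fun_prop
  · refine (hbound (r * s + c) (by simpa using h _ hs)).trans ?_
    rw [mul_assoc, ← Real.mul_rpow (by positivity) (by positivity)]
    have hnorm : ‖(r * s + c : ℂ)‖ ≤ |r| * ‖s‖ + |c| := by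
      simpa using norm_add_le (r * s) (c : ℂ)
    gcongr
    nlinarith [norm_nonneg s, mul_nonneg (abs_nonneg c) (norm_nonneg s), abs_nonneg r]

theorem inv_add_const {δ : ℝ} (hδ : 0 < δ) (h : ∀ x ∈ J, δ ≤ |x + c.re|) :
    HolomorphicWithGrowth (fun s => (s + c)⁻¹) J (-1) := by
  have hnorm {s : ℂ} (hs : s.re ∈ J) : δ ≤ ‖s + c‖ :=
    (h _ hs).trans (by simpa using (s + c).abs_re_le_norm)
  refine of_norm_le (C := (1 + ‖c‖) / δ + 1) (fun {s} hs => ?_) fun {s} hs => ?_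
  · have : s + c ≠ 0 := norm_pos_iff.1 (hδ.trans_le (hnorm hs))
    fun_prop (disch := exact this)
  · have hpos := hδ.trans_le (hnorm hs)
    rw [norm_inv, Real.rpow_neg_one, ← div_eq_mul_inv, le_div_iff₀ (by positivity),
      inv_mul_le_iff₀ hpos]
    have hs' : ‖s‖ ≤ ‖s + c‖ + ‖c‖ := by simpa using norm_sub_le (s + c) c
    have hc : 1 + ‖c‖ ≤ ‖s + c‖ * ((1 + ‖c‖) / δ) := by
      rw [mul_div_assoc', le_div_iff₀ hδ, mul_comm]
      exact mul_le_mul_of_nonneg_right (hnorm hs) (by positivity)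
    linarith

theorem inv_add_const_Ici (h : 0 < σ + c.re) :
    HolomorphicWithGrowth (fun s => (s + c)⁻¹) (Set.Ici σ) (-1) :=
  inv_add_const h fun x hx => (by linarith [Set.mem_Ici.1 hx] : σ + c.re ≤ x + c.re).trans
    (le_abs_self _)

theorem inv_const_sub_line (h : σ < a.re) :
    HolomorphicWithGrowth (fun s => (a - s)⁻¹) {σ} (-1) := by
  have := (inv_add_const (J := {σ}) (c := -a) (sub_pos.2 h) fun x hx => ?_).const_mul (-1)
  · simpa [← inv_neg, ← sub_eq_add_neg] using this
  · rw [Set.mem_singleton_iff.1 hx, neg_re, ← sub_eq_add_neg, abs_sub_comm]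
    exact le_abs_self _

theorem continuous_line (hf : HolomorphicWithGrowth f J α) (hσ : σ ∈ J) :
    Continuous fun t : ℝ => f (σ + t * I) :=
  continuous_iff_continuousAt.2 fun t =>
    ContinuousAt.comp (g := f) (f := fun t : ℝ => (σ + t * I : ℂ))
      (hf.differentiableAt (by simpa)).continuousAt (by fun_prop)

theorem exists_bound_line (hf : HolomorphicWithGrowth f J α) (hα : α ≤ 0) :
    ∃ C, ∀ σ ∈ J, ∀ t : ℝ, ‖f (σ + t * I)‖ ≤ C * (1 + ‖t‖) ^ α := by
  obtain ⟨C, hC, h⟩ := hf.exists_bound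
  refine ⟨C, fun σ hσ t => (h (σ + t * I) (by simpa)).trans ?_⟩
  have ht : ‖t‖ ≤ ‖(σ + t * I : ℂ)‖ := by simpa using (σ + t * I : ℂ).abs_im_le_norm
  exact mul_le_mul_of_nonneg_left
    (Real.rpow_le_rpow_of_nonpos (by positivity) (by linarith) hα) hC.le

theorem integrable_line (hf : HolomorphicWithGrowth f J α) (hα : α < -1) (hσ : σ ∈ J) :
    Integrable fun t : ℝ => f (σ + t * I) := by
  obtain ⟨C, hC⟩ := hf.exists_bound_line (by linarith)
  have hint : Integrable fun t : ℝ => (1 + ‖t‖) ^ α := by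
    simpa using integrable_one_add_norm (E := ℝ) (μ := volume) (r := -α) (by simp; linarith)
  exact (hint.const_mul C).mono' (hf.continuous_line hσ).aestronglyMeasurable
    (ae_of_all _ (hC σ hσ))

theorem tendsto_integral_horizontal (hf : HolomorphicWithGrowth f (Set.Icc σ₁ σ₂) α) (hα : α < 0)
    (h : σ₁ ≤ σ₂) {e : ℝ → ℝ} (he : Tendsto (fun T => ‖e T‖) atTop atTop) :
    Tendsto (fun T => ∫ x in σ₁..σ₂, f (x + e T * I)) atTop (𝓝 0) := by
  obtain ⟨C, hC⟩ := hf.exists_bound_line hα.le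
  have hlim : Tendsto (fun T => C * (1 + ‖e T‖) ^ α * |σ₂ - σ₁|) atTop (𝓝 0) := by
    have := (tendsto_rpow_neg_atTop (neg_pos.2 hα)).comp (tendsto_atTop_add_const_left _ 1 he)
    simpa [Function.comp_def] using (this.const_mul C).mul_const |σ₂ - σ₁|
  refine squeeze_zero_norm (fun T => ?_) hlim
  refine intervalIntegral.norm_integral_le_of_norm_le_const fun x hx => hC x ?_ (e T)
  exact Set.Ioc_subset_Icc_self (by rwa [Set.uIoc_of_le h] at hx)

theorem integral_line_eq (hf : HolomorphicWithGrowth f (Set.Icc σ₁ σ₂) α) (hα : α < -1)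
    (h : σ₁ ≤ σ₂) : ∫ t : ℝ, f (σ₁ + t * I) = ∫ t : ℝ, f (σ₂ + t * I) := by
  have hrect (T : ℝ) : (∫ t in (-T)..T, f (σ₂ + t * I)) - ∫ t in (-T)..T, f (σ₁ + t * I) =
      I * ((∫ x in σ₁..σ₂, f (x + ((-T : ℝ)) * I)) - ∫ x in σ₁..σ₂, f (x + (T : ℝ) * I)) := by
    have := integral_boundary_rect_eq_zero_of_differentiableOn f (σ₁ + (-T : ℝ) * I)
      (σ₂ + (T : ℝ) * I) fun s hs => (hf.differentiableAt
        (by simpa [Set.uIcc_of_le h] using hs.1)).differentiableWithinAt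
    simp only [add_re, ofReal_re, mul_re, I_re, mul_zero, I_im, ofReal_im, mul_one, sub_self,
      add_zero, add_im, mul_im, zero_add, smul_eq_mul] at this
    linear_combination -I * this - ((∫ t in (-T)..T, f (σ₁ + t * I)) -
      ∫ t in (-T)..T, f (σ₂ + t * I)) * I_mul_I
  have hhor := ((hf.tendsto_integral_horizontal (by linarith) h
    (e := fun T => -T) (by simpa using tendsto_abs_atTop_atTop)).sub
    (hf.tendsto_integral_horizontal (by linarith) h
      (e := id) tendsto_abs_atTop_atTop)).const_mul I
  have hvert {σ : ℝ} (hσ : σ ∈ Set.Icc σ₁ σ₂) := intervalIntegral_tendsto_integral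
    (hf.integrable_line hα hσ) tendsto_neg_atTop_atBot tendsto_id
  have hdiff := (hvert (Set.right_mem_Icc.2 h)).sub (hvert (Set.left_mem_Icc.2 h))
  simp only [id_eq, sub_self, mul_zero] at hhor hdiff
  exact (sub_eq_zero.1 (tendsto_nhds_unique (hdiff.congr hrect) hhor)).symm

theorem tendsto_horizontal (hf : HolomorphicWithGrowth f (Set.Ici σ) α) (hα : α < 0) (t : ℝ) :
    Tendsto (fun R : ℝ => f (R + t * I)) atTop (𝓝 0) := by
  obtain ⟨C, -, hC⟩ := hf.exists_bound
  have hnorm : Tendsto (fun R : ℝ => 1 + ‖(R + t * I : ℂ)‖) atTop atTop := by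
    refine tendsto_atTop_mono (fun R => ?_) tendsto_id
    have := (R + t * I : ℂ).re_le_norm
    simp at this
    simp only [id_eq]
    linarith
  have := ((tendsto_rpow_neg_atTop (neg_pos.2 hα)).comp hnorm).const_mul C
  refine squeeze_zero_norm' ?_ (by simpa using this)
  filter_upwards [eventually_ge_atTop σ] with R hR
  simpa using hC (R + t * I) (by simpa)

theorem integral_line_eq_zero (hf : HolomorphicWithGrowth f (Set.Ici σ) α) (hα : α < -1) :
    ∫ t : ℝ, f (σ + t * I) = 0 := by
  obtain ⟨C, hC⟩ := hf.exists_bound_line (by linarith)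
  have hlim : Tendsto (fun R : ℝ => ∫ t : ℝ, f (R + t * I)) atTop (𝓝 (∫ _ : ℝ, (0 : ℂ))) := by
    refine tendsto_integral_filter_of_dominated_convergence (fun t => C * (1 + ‖t‖) ^ α) ?_ ?_ ?_
      (ae_of_all _ fun t => hf.tendsto_horizontal (by linarith) t)
    · filter_upwards [eventually_ge_atTop σ] with R hR
        using (hf.continuous_line hR).aestronglyMeasurable
    · filter_upwards [eventually_ge_atTop σ] with R hR using ae_of_all _ (hC R hR)
    · refine .const_mul ?_ C
      simpa using integrable_one_add_norm (E := ℝ) (μ := volume) (r := -α) (by simp; linarith)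
  rw [integral_zero] at hlim
  refine tendsto_nhds_unique (tendsto_const_nhds.congr' ?_) hlim
  filter_upwards [eventually_ge_atTop σ] with R hR
    using (hf.mono_set Set.Icc_subset_Ici_self).integral_line_eq hα hR

end HolomorphicWithGrowth

theorem integral_poissonKernel_line {a : ℂ} {σ : ℝ} (hσ : σ < a.re) :
    ∫ t : ℝ, 2 * (a.re - σ) / ‖a - (σ + t * I)‖ ^ 2 = 2 * Real.pi := by
  have hy : 0 < a.re - σ := sub_pos.2 hσ
  have hnorm (t : ℝ) : 2 * (a.re - σ) / ‖a - (σ + t * I)‖ ^ 2 =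
      2 / (a.re - σ) * (1 + ((a.im - t) / (a.re - σ)) ^ 2)⁻¹ := by
    rw [← normSq_eq_norm_sq, normSq_apply]
    simp only [sub_re, add_re, ofReal_re, mul_re, I_re, mul_zero, ofReal_im, I_im, mul_one,
      sub_self, add_zero, sub_im, add_im, mul_im, zero_add]
    field_simp
  simp_rw [hnorm]
  rw [integral_const_mul, integral_sub_left_eq_self
    (fun t => (1 + (t / (a.re - σ)) ^ 2)⁻¹) volume a.im,
    Measure.integral_comp_div (fun t : ℝ => (1 + t ^ 2)⁻¹), integral_univ_inv_one_add_sq,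
    abs_of_pos hy, smul_eq_mul]
  field_simp

theorem integrable_poissonKernel_line {a : ℂ} {σ : ℝ} (hσ : σ < a.re) :
    Integrable fun t : ℝ => 2 * (a.re - σ) / ‖a - (σ + t * I)‖ ^ 2 := by
  refine .of_integral_ne_zero ?_
  rw [integral_poissonKernel_line hσ]
  positivity

theorem add_conj_sub_two_mul (a : ℂ) (σ : ℝ) :
    a + (conj a - 2 * σ) = (2 * (a.re - σ) : ℝ) := by
  rw [← add_sub_assoc, add_conj]
  push_cast
  ring

theorem add_mul_sub_line_eq_norm_sq (a : ℂ) (σ t : ℝ) :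
    ((σ + t * I) + (conj a - 2 * σ)) * (a - (σ + t * I)) = (‖a - (σ + t * I)‖ ^ 2 : ℝ) := by
  have hconj : (σ + t * I) + (conj a - 2 * σ) = conj (a - (σ + t * I)) := by
    simp
    ring
  rw [hconj, conj_mul']
  norm_cast

theorem sub_line_ne_zero {a : ℂ} {σ : ℝ} (hσ : σ < a.re) (t : ℝ) : a - (σ + t * I) ≠ 0 := by
  intro h
  have := congrArg re h
  simp at this
  linarith

namespace HolomorphicWithGrowth

variable {f g : ℂ → ℂ} {J : Set ℝ} {α σ : ℝ} {a b c : ℂ}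

theorem isBigO_dslope_compl_ball (hf : HolomorphicWithGrowth f J α) (ha : f a = 0) {r : ℝ}
    (hr : 0 < r) :
    dslope f a =O[𝓟 (re ⁻¹' J \ Metric.ball a r)] fun s => (1 + ‖s‖) ^ (α - 1) := by
  obtain ⟨C, hC0, hC⟩ := hf.exists_bound
  refine isBigO_principal.2 ⟨C * ((1 + ‖a‖) / r + 1), fun s ⟨hs, hsr⟩ => ?_⟩
  have hsa : r ≤ ‖s - a‖ := by simpa [dist_eq_norm] using hsr
  have hpos : 0 < ‖s - a‖ := hr.trans_le hsa
  have hdist : 1 + ‖s‖ ≤ ((1 + ‖a‖) / r + 1) * ‖s - a‖ := by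
    have h1 : ‖s‖ ≤ ‖s - a‖ + ‖a‖ := by simpa using norm_add_le (s - a) a
    have h2 : 1 + ‖a‖ ≤ (1 + ‖a‖) / r * ‖s - a‖ := by
      rw [div_mul_eq_mul_div, le_div_iff₀ hr]
      exact mul_le_mul_of_nonneg_left hsa (by positivity)
    linarith
  have hslope : ‖dslope f a s‖ = ‖f s‖ / ‖s - a‖ := by
    rw [dslope_of_ne _ (sub_ne_zero.1 (norm_pos_iff.1 hpos)), slope_def_field, ha, sub_zero,
      norm_div]
  rw [hslope, Real.norm_of_nonneg (by positivity), Real.rpow_sub_one (by positivity),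
    div_le_iff₀ hpos]
  calc ‖f s‖ ≤ C * (1 + ‖s‖) ^ α := hC s hs
    _ = C * (1 + ‖s‖) ^ α / (1 + ‖s‖) * (1 + ‖s‖) := by field_simp
    _ ≤ C * (1 + ‖s‖) ^ α / (1 + ‖s‖) * (((1 + ‖a‖) / r + 1) * ‖s - a‖) := by gcongr
    _ = _ := by ring

theorem dslope_of_eq_zero (hf : HolomorphicWithGrowth f (Set.Ici σ) α) (ha : f a = 0)
    (hσ : σ < a.re) : HolomorphicWithGrowth (dslope f a) (Set.Ici σ) (α - 1) := by
  have hopen : {s : ℂ | σ < s.re} ∈ 𝓝 a := (isOpen_lt continuous_const continuous_re).mem_nhds hσ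
  have hdiff {s : ℂ} (hs : s.re ∈ Set.Ici σ) : DifferentiableAt ℂ (dslope f a) s := by
    rcases eq_or_ne s a with rfl | hne
    · refine ((differentiableOn_dslope hopen).2 fun z hz => ?_).differentiableAt hopen
      exact (hf.differentiableAt (Set.mem_Ici.2 (le_of_lt hz))).differentiableWithinAt
    · exact (differentiableAt_dslope_of_ne hne).2 (hf.differentiableAt hs)
  obtain ⟨r, hr, hball⟩ := Metric.nhds_basis_closedBall.mem_iff.1 hopen
  refine ⟨hdiff, ?_⟩
  have hcompact : dslope f a =O[𝓟 (Metric.closedBall a r)] fun s => (1 + ‖s‖) ^ (α - 1) := by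
    have hcont : ContinuousOn (dslope f a) (Metric.closedBall a r) := fun s hs =>
      (hdiff (Set.mem_Ici.2 (le_of_lt (hball hs)))).continuousAt.continuousWithinAt
    have hweight : Continuous fun s : ℂ => (1 + ‖s‖) ^ (α - 1) :=
      .rpow_const (by fun_prop) fun s => .inl (by positivity)
    refine (hcont.isBigO_principal (isCompact_closedBall a r) (c := (1 : ℝ)) (by simp)).trans ?_
    exact hweight.continuousOn.isBigO_rev_principal (isCompact_closedBall a r)
      (fun s _ => by positivity) 1
  refine (hcompact.sup (hf.isBigO_dslope_compl_ball ha hr)).mono ?_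
  rw [sup_principal]
  refine principal_mono.2 fun s hs => ?_
  by_cases hsr : s ∈ Metric.ball a r
  · exact .inl (Metric.ball_subset_closedBall hsr)
  · exact .inr ⟨hs, hsr⟩

theorem integral_line_div_sub (hf : HolomorphicWithGrowth f (Set.Ici σ) α) (hα : α < 0)
    (hσ : σ < a.re) :
    ∫ t : ℝ, f (σ + t * I) / (a - (σ + t * I)) = 2 * Real.pi * f a := by
  set c := conj a - 2 * σ with hc
  have hac : a + c = (2 * (a.re - σ) : ℝ) := add_conj_sub_two_mul a σ
  have hac0 : a + c ≠ 0 := by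
    rw [hac]
    exact_mod_cast (by linarith : (2 * (a.re - σ)) ≠ 0)
  -- `g` removes from `f` the multiple of `1 / (s + c)` which agrees with it at `a`; on the line
  -- that multiple contributes a Poisson kernel.
  set g : ℂ → ℂ := fun s => f s - f a * (a + c) * (s + c)⁻¹ with hg
  have hga : g a = 0 := by simp [hg, mul_assoc, hac0]
  have hgrowth : HolomorphicWithGrowth g (Set.Ici σ) (max α (-1)) :=
    (hf.mono_exponent (le_max_left _ _)).sub
      (((inv_add_const_Ici (by simp [hc]; linarith)).const_mul _).mono_exponent (le_max_right _ _))
  have hdslope := hgrowth.dslope_of_eq_zero hga hσ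
  have hlt : max α (-1) - 1 < -1 := by linarith [max_lt hα (by norm_num : (-1 : ℝ) < 0)]
  have hsplit (t : ℝ) : f (σ + t * I) / (a - (σ + t * I)) = -dslope g a (σ + t * I) +
      f a * (2 * (a.re - σ) / ‖a - (σ + t * I)‖ ^ 2 : ℝ) := by
    have hz := sub_line_ne_zero hσ t
    have hzc := add_mul_sub_line_eq_norm_sq a σ t
    rw [← hc] at hzc
    have hzc0 : (σ + t * I) + c ≠ 0 := fun h => by
      rw [h, zero_mul, eq_comm] at hzc
      simp [hz] at hzc
    rw [dslope_of_ne _ (sub_ne_zero.1 hz).symm, slope_def_field, hga, ofReal_div, ← hac, ← hzc,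
      sub_zero, ← div_neg, neg_sub]
    simp only [hg]
    field_simp
    ring
  have hint : Integrable fun t : ℝ => -dslope g a (σ + t * I) :=
    (hdslope.integrable_line hlt Set.self_mem_Ici).neg
  have hint' : Integrable fun t : ℝ =>
      f a * ((2 * (a.re - σ) / ‖a - (σ + t * I)‖ ^ 2 : ℝ) : ℂ) :=
    (integrable_poissonKernel_line hσ).ofReal.const_mul _
  simp_rw [hsplit]
  rw [integral_add hint hint', integral_neg,
    hdslope.integral_line_eq_zero hlt, integral_const_mul, integral_complex_ofReal,
    integral_poissonKernel_line hσ]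
  push_cast
  ring

theorem integral_line_mul_poissonKernel (hf : HolomorphicWithGrowth f (Set.Ici σ) α) (hα : α < 1)
    (hσ : σ < a.re) :
    ∫ t : ℝ, f (σ + t * I) * (2 * (a.re - σ) / ‖a - (σ + t * I)‖ ^ 2 : ℝ) =
      2 * Real.pi * f a := by
  set c := conj a - 2 * σ with hc
  have hac : a + c = (2 * (a.re - σ) : ℝ) := add_conj_sub_two_mul a σ
  have hac0 : a + c ≠ 0 := by
    rw [hac]
    exact_mod_cast (by linarith : (2 * (a.re - σ)) ≠ 0)
  have hgrowth := (hf.mul (inv_add_const_Ici (σ := σ) (c := c) (by simp [hc]; linarith))).const_mul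
    (a + c)
  convert hgrowth.integral_line_div_sub (by linarith) hσ using 2
  · ext t
    rw [ofReal_div, ← hac, ← add_mul_sub_line_eq_norm_sq, ← hc]
    field_simp
  · field_simp

theorem integrable_line_mul_poissonKernel (hf : HolomorphicWithGrowth f {σ} α) (hα : α < 1)
    (hσ : σ < a.re) :
    Integrable fun t : ℝ => f (σ + t * I) * (2 * (a.re - σ) / ‖a - (σ + t * I)‖ ^ 2 : ℝ) := by
  have hgrowth := ((hf.mul (inv_add_const (J := {σ}) (c := conj a - 2 * σ)
    (sub_pos.2 hσ) ?_)).mul (inv_const_sub_line hσ)).const_mul (2 * (a.re - σ) : ℝ)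
  · convert hgrowth.integrable_line (by linarith) rfl using 2 with t
    rw [ofReal_div, ← add_mul_sub_line_eq_norm_sq]
    field_simp
  · rintro x rfl
    rw [sub_re, conj_re, ← ofReal_ofNat, re_ofReal_mul, ofReal_re]
    exact le_abs.2 (.inl (by linarith))

theorem integral_line_re_mul_poissonKernel (hf : HolomorphicWithGrowth f (Set.Ici σ) α)
    (hα : α < 1) (hσ : σ < a.re) :
    Integrable (fun t : ℝ => (f (σ + t * I)).re * (2 * (a.re - σ) / ‖a - (σ + t * I)‖ ^ 2)) ∧
    ∫ t : ℝ, (f (σ + t * I)).re * (2 * (a.re - σ) / ‖a - (σ + t * I)‖ ^ 2) =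
      2 * Real.pi * (f a).re := by
  have hint := (hf.mono_set (Set.singleton_subset_iff.2
    Set.self_mem_Ici)).integrable_line_mul_poissonKernel hα hσ
  have hre (t : ℝ) := re_mul_ofReal (f (σ + t * I)) (2 * (a.re - σ) / ‖a - (σ + t * I)‖ ^ 2)
  refine ⟨hint.re.congr (ae_of_all _ hre), ?_⟩
  have := (integral_re hint).trans (congrArg re (hf.integral_line_mul_poissonKernel hα hσ))
  refine (integral_congr_ae (ae_of_all _ fun t => (hre t).symm)).trans (this.trans ?_)
  rw [mul_assoc, ← ofReal_ofNat, re_ofReal_mul, re_ofReal_mul, mul_assoc]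

theorem integral_line_div_sub_mul_sub (hf : HolomorphicWithGrowth f (Set.Ici σ) α) (hα : α < 1)
    (ha : σ < a.re) (hb : σ < b.re) (hab : a ≠ b) :
    ∫ t : ℝ, f (σ + t * I) / ((a - (σ + t * I)) * (b - (σ + t * I))) =
      2 * Real.pi * ((f a - f b) / (b - a)) := by
  set c : ℂ := 1 - σ with hc
  have hne {z : ℂ} (hz : σ ≤ z.re) : z + c ≠ 0 := fun h => by
    have := congrArg re h
    simp [hc] at this
    linarith
  have hgrowth := hf.mul (inv_add_const_Ici (σ := σ) (c := c) (by simp [hc]))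
  have hint {z : ℂ} (hz : σ < z.re) :
      Integrable fun t : ℝ => f (σ + t * I) * ((σ + t * I) + c)⁻¹ / (z - (σ + t * I)) :=
    ((hgrowth.mono_set (Set.singleton_subset_iff.2 Set.self_mem_Ici)).mul
      (inv_const_sub_line hz)).integrable_line (by linarith) rfl
  have hab' : b - a ≠ 0 := sub_ne_zero.2 hab.symm
  have hpartial (t : ℝ) : f (σ + t * I) / ((a - (σ + t * I)) * (b - (σ + t * I))) =
      (a + c) / (b - a) * (f (σ + t * I) * ((σ + t * I) + c)⁻¹ / (a - (σ + t * I))) -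
      (b + c) / (b - a) * (f (σ + t * I) * ((σ + t * I) + c)⁻¹ / (b - (σ + t * I))) := by
    have hs0 := hne (z := σ + t * I) (by simp)
    have ha0 := sub_line_ne_zero ha t
    have hb0 := sub_line_ne_zero hb t
    field_simp
    ring
  simp_rw [hpartial]
  rw [integral_sub ((hint ha).const_mul _) ((hint hb).const_mul _), integral_const_mul,
    integral_const_mul, hgrowth.integral_line_div_sub (by linarith) ha,
    hgrowth.integral_line_div_sub (by linarith) hb]
  have ha0 := hne ha.le
  have hb0 := hne hb.le
  field_simp

end HolomorphicWithGrowth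

/-- The weight `x ^ (s + 1) / (s (s + 1))` whose integral against `∑ a n / n ^ s` over a vertical
line is the Riesz mean `∑ (x - n) a n` over `n ≤ x`, up to the factor `2π`. -/
noncomputable def perronKernel (x : ℝ) (s : ℂ) : ℂ := (x : ℂ) ^ (s + 1) / (s * (s + 1))

section PerronKernel

variable {K : ℂ → ℂ} {α σ σ₁ σ₂ x : ℝ}

theorem HolomorphicWithGrowth.cpow_const_sub (hx : 1 ≤ x) (c : ℂ) :
    HolomorphicWithGrowth (fun s => (x : ℂ) ^ (c - s)) (Set.Ici σ) 0 := by
  have hx0 : 0 < x := by linarith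
  have hxc : (x : ℂ) ≠ 0 := by exact_mod_cast hx0.ne'
  refine .of_norm_le (C := x ^ (c.re - σ)) (fun _ => by fun_prop (disch := simp [hxc]))
    fun {s} hs => ?_
  rw [Real.rpow_zero, mul_one, norm_cpow_eq_rpow_re_of_pos hx0, sub_re]
  exact Real.rpow_le_rpow_of_exponent_le hx (by linarith [Set.mem_Ici.1 hs])

theorem HolomorphicWithGrowth.cpow_add_const (hx : 0 < x) (c : ℂ) :
    HolomorphicWithGrowth (fun s => (x : ℂ) ^ (s + c)) (Set.Icc σ₁ σ₂) 0 := by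
  have hxc : (x : ℂ) ≠ 0 := by exact_mod_cast hx.ne'
  refine .of_norm_le (C := x ^ (σ₁ + c.re) + x ^ (σ₂ + c.re))
    (fun _ => by fun_prop (disch := simp [hxc])) fun {s} hs => ?_
  rw [Real.rpow_zero, mul_one, norm_cpow_eq_rpow_re_of_pos hx, add_re]
  rcases le_total 1 x with h1 | h1
  · have := Real.rpow_le_rpow_of_exponent_le h1 (by linarith [hs.2] : s.re + c.re ≤ σ₂ + c.re)
    linarith [Real.rpow_nonneg hx.le (σ₁ + c.re)]
  · have := Real.rpow_le_rpow_of_exponent_ge hx h1 (by linarith [hs.1] : σ₁ + c.re ≤ s.re + c.re)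
    linarith [Real.rpow_nonneg hx.le (σ₂ + c.re)]

theorem holomorphicWithGrowth_perronKernel (hx : 0 < x) (hσ : 0 < σ₁) :
    HolomorphicWithGrowth (perronKernel x) (Set.Icc σ₁ σ₂) (-2) := by
  have h0 := HolomorphicWithGrowth.inv_add_const_Ici (σ := σ₁) (c := 0) (by simpa)
  have h1 := HolomorphicWithGrowth.inv_add_const_Ici (σ := σ₁) (c := 1) (by simp; linarith)
  convert (HolomorphicWithGrowth.cpow_add_const hx 1).mul
    ((h0.mul h1).mono_set Set.Icc_subset_Ici_self) using 1
  · ext s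
    rw [perronKernel, add_zero, ← mul_inv, div_eq_mul_inv]
  · norm_num

theorem conj_perronKernel_line (hx : 0 < x) (σ t : ℝ) :
    conj (perronKernel x (σ + t * I)) = (x : ℂ) ^ ((2 * σ + 1 : ℂ) - (σ + t * I)) /
      (((2 * σ : ℂ) - (σ + t * I)) * ((2 * σ + 1 : ℂ) - (σ + t * I))) := by
  have hconj : conj ((σ + t * I : ℂ)) = 2 * σ - (σ + t * I) := by
    simp
    ring
  have hconj' : conj ((σ + t * I : ℂ) + 1) = 2 * σ + 1 - (σ + t * I) := by
    rw [map_add, hconj, map_one]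
    ring
  have harg : (x : ℂ).arg ≠ Real.pi := by
    rw [arg_ofReal_of_nonneg hx.le]
    exact Real.pi_ne_zero.symm
  rw [perronKernel, map_div₀, map_mul, hconj, ← hconj', cpow_conj _ _ harg, conj_ofReal]

theorem integral_mul_conj_perronKernel (hK : HolomorphicWithGrowth K (Set.Ici σ) α) (hα : α < 1)
    (hσ : 0 < σ) (hx : 1 ≤ x) :
    ∫ t : ℝ, K (σ + t * I) * conj (perronKernel x (σ + t * I)) =
      2 * Real.pi * (x * K (2 * σ) - K (2 * σ + 1)) := by
  have hprod := hK.mul (HolomorphicWithGrowth.cpow_const_sub hx (2 * σ + 1))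
  convert hprod.integral_line_div_sub_mul_sub (a := 2 * σ) (b := 2 * σ + 1) (by linarith)
    (by simp; linarith) (by simp; linarith) (by simp) using 2
  · ext t
    rw [conj_perronKernel_line (by linarith), mul_div_assoc]
  · simp [mul_comm]

theorem norm_perronKernel_line_le (hσ : 0 < σ) (hx : 0 < x) (t : ℝ) :
    ‖perronKernel x (σ + t * I)‖ ≤
      x ^ (σ + 1) / (2 * σ) * (2 * (2 * σ - σ) / ‖2 * σ - (σ + t * I)‖ ^ 2) := by
  have hnorm : ‖(2 * σ - (σ + t * I) : ℂ)‖ = ‖(σ + t * I : ℂ)‖ := by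
    rw [← norm_conj (σ + t * I)]
    congr 1
    simp
    ring
  have hpos : 0 < ‖(σ + t * I : ℂ)‖ := hσ.trans_le (by simpa using (σ + t * I : ℂ).re_le_norm)
  have hle : ‖(σ + t * I : ℂ)‖ ≤ ‖(σ + t * I + 1 : ℂ)‖ := by
    rw [← sq_le_sq₀ (norm_nonneg _) (norm_nonneg _), ← normSq_eq_norm_sq, ← normSq_eq_norm_sq,
      normSq_apply, normSq_apply]
    simp
    nlinarith
  rw [perronKernel, norm_div, norm_mul, norm_cpow_eq_rpow_re_of_pos hx, hnorm]
  simp only [add_re, ofReal_re, mul_re, I_re, mul_zero, ofReal_im, I_im, mul_one, sub_self,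
    add_zero, one_re]
  calc x ^ (σ + 1) / (‖(σ + t * I : ℂ)‖ * ‖(σ + t * I + 1 : ℂ)‖)
      ≤ x ^ (σ + 1) / (‖(σ + t * I : ℂ)‖ * ‖(σ + t * I : ℂ)‖) := by gcongr
    _ = _ := by field_simp; ring

theorem integrable_mul_perronKernel (hK : HolomorphicWithGrowth K {σ} α) (hα : α < 1)
    (hσ : 0 < σ) (hx : 0 < x) :
    Integrable fun t : ℝ => K (σ + t * I) * perronKernel x (σ + t * I) := by
  have hw : HolomorphicWithGrowth (perronKernel x) {σ} (-2) := by
    simpa using holomorphicWithGrowth_perronKernel (σ₂ := σ) hx hσ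
  exact (hK.mul hw).integrable_line (by linarith) rfl

theorem integrable_mul_conj_perronKernel (hK : HolomorphicWithGrowth K {σ} α) (hα : α < 1)
    (hσ : 0 < σ) (hx : 0 < x) :
    Integrable fun t : ℝ => K (σ + t * I) * conj (perronKernel x (σ + t * I)) := by
  have hw : HolomorphicWithGrowth (perronKernel x) {σ} (-2) := by
    simpa using holomorphicWithGrowth_perronKernel (σ₂ := σ) hx hσ
  refine (integrable_mul_perronKernel hK hα hσ hx).norm.mono' ?_ (ae_of_all _ fun t => by simp)
  exact ((hK.continuous_line rfl).mul
    (continuous_conj.comp (hw.continuous_line rfl))).aestronglyMeasurable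

theorem abs_integral_re_add_conj_perronKernel_le
    (hK : HolomorphicWithGrowth K (Set.Ici σ) α) (hα : α < 1) (hσ : 0 < σ) (hx : 0 < x)
    (hre : ∀ t : ℝ, 0 ≤ (K (σ + t * I)).re) :
    |∫ t : ℝ, (K (σ + t * I) * perronKernel x (σ + t * I) +
        K (σ + t * I) * conj (perronKernel x (σ + t * I))).re| ≤
      2 * Real.pi * (x ^ (σ + 1) / σ * (K (2 * σ)).re) := by
  have hre2 : (2 * σ : ℂ).re = 2 * σ := by simp
  obtain ⟨hint, hpoisson⟩ := hK.integral_line_re_mul_poissonKernel hα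
    (by linarith : σ < (2 * σ : ℂ).re)
  rw [hre2] at hint hpoisson
  have hbound (t : ℝ) : ‖(K (σ + t * I) * perronKernel x (σ + t * I) +
      K (σ + t * I) * conj (perronKernel x (σ + t * I))).re‖ ≤ x ^ (σ + 1) / σ *
        ((K (σ + t * I)).re * (2 * (2 * σ - σ) / ‖2 * σ - (σ + t * I)‖ ^ 2)) := by
    have hwt := (abs_re_le_norm (perronKernel x (σ + t * I))).trans
      (norm_perronKernel_line_le hσ hx t)
    rw [← mul_add, add_conj, re_mul_ofReal, norm_mul, Real.norm_of_nonneg (hre t), norm_mul,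
      Real.norm_two, Real.norm_eq_abs]
    refine (mul_le_mul_of_nonneg_left (mul_le_mul_of_nonneg_left hwt zero_le_two)
      (hre t)).trans_eq ?_
    field_simp
  refine (norm_integral_le_of_norm_le (hint.const_mul (x ^ (σ + 1) / σ))
    (ae_of_all _ hbound)).trans_eq ?_
  rw [integral_const_mul, hpoisson]
  ring

/-- For `K` of nonnegative real part, adding the integral of `K` against the conjugate kernel leaves
an integral of `2 K Re w` whose real part the Poisson formula controls. -/
theorem abs_re_integral_mul_perronKernel_add_le
    (hK : HolomorphicWithGrowth K (Set.Ici σ) α) (hα : α < 1) (hσ : 0 < σ) (hx : 1 ≤ x)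
    (hre : ∀ t : ℝ, 0 ≤ (K (σ + t * I)).re) :
    |(∫ t : ℝ, K (σ + t * I) * perronKernel x (σ + t * I)).re +
        2 * Real.pi * (x * K (2 * σ) - K (2 * σ + 1)).re| ≤
      2 * Real.pi * (x ^ (σ + 1) / σ * (K (2 * σ)).re) := by
  have hx0 : 0 < x := by linarith
  have hK' := hK.mono_set (Set.singleton_subset_iff.2 Set.self_mem_Ici)
  have hKw := integrable_mul_perronKernel hK' hα hσ hx0
  have hKcw := integrable_mul_conj_perronKernel hK' hα hσ hx0
  have hconj := congrArg re (integral_mul_conj_perronKernel hK hα hσ hx)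
  have htwo_pi : (2 * Real.pi : ℂ) = ((2 * Real.pi : ℝ) : ℂ) := by push_cast; rfl
  rw [htwo_pi, re_ofReal_mul] at hconj
  convert abs_integral_re_add_conj_perronKernel_le hK hα hσ hx0 hre using 2
  refine Eq.trans ?_ (integral_re (hKw.add hKcw)).symm
  rw [← hconj, integral_add' hKw hKcw]
  simp

end PerronKernel

section MellinOfBounded

variable {f : ℝ → ℂ} {C : ℝ}

theorem mellin_neg_eq_integral_Ioi_one (hsupp : ∀ x ≤ 1, f x = 0) (s : ℂ) :
    mellin f (-s) = ∫ x in Set.Ioi (1 : ℝ), (x : ℂ) ^ (-s - 1) * f x := by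
  refine setIntegral_eq_of_subset_of_forall_sdiff_eq_zero measurableSet_Ioi
    (Set.Ioi_subset_Ioi zero_le_one) fun x hx => ?_
  rw [hsupp x (not_lt.1 hx.2), smul_zero]

theorem norm_cpow_neg_sub_one_mul_le (hC : ∀ x, ‖f x‖ ≤ C) {x : ℝ} (hx : 0 < x) (s : ℂ) :
    ‖(x : ℂ) ^ (-s - 1) * f x‖ ≤ x ^ (-s.re - 1) * C := by
  rw [norm_mul, norm_cpow_eq_rpow_re_of_pos hx]
  simp only [sub_re, neg_re, one_re]
  exact mul_le_mul_of_nonneg_left (hC x) (by positivity)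

theorem integrableOn_Ioi_rpow_neg_sub_one {r : ℝ} (hr : 0 < r) :
    IntegrableOn (fun x : ℝ => x ^ (-r - 1)) (Set.Ioi 1) :=
  integrableOn_Ioi_rpow_of_lt (by linarith) one_pos

theorem norm_mellin_neg_le (hC : ∀ x, ‖f x‖ ≤ C) (hsupp : ∀ x ≤ 1, f x = 0) {s : ℂ}
    (hs : 0 < s.re) : ‖mellin f (-s)‖ ≤ C / s.re := by
  rw [mellin_neg_eq_integral_Ioi_one hsupp]
  refine (norm_integral_le_of_norm_le ((integrableOn_Ioi_rpow_neg_sub_one hs).mul_const C)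
    (ae_restrict_of_forall_mem measurableSet_Ioi fun x hx =>
      norm_cpow_neg_sub_one_mul_le hC (one_pos.trans hx) s)).trans_eq ?_
  rw [integral_mul_const, integral_Ioi_rpow_of_lt (by linarith) one_pos, sub_add_cancel,
    Real.one_rpow, neg_div_neg_eq, one_div_mul_eq_div]

theorem differentiableAt_mellin_neg (hf : AEStronglyMeasurable f) (hC : ∀ x, ‖f x‖ ≤ C)
    (hsupp : ∀ x ≤ 1, f x = 0) {s : ℂ} (hs : 0 < s.re) :
    DifferentiableAt ℂ (fun z => mellin f (-z)) s := by
  have hloc : LocallyIntegrableOn f (Set.Ioi 0) :=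
    ((locallyIntegrable_const C).mono hf
      (ae_of_all _ fun x => (hC x).trans (Real.le_norm_self C))).locallyIntegrableOn _
  have htop : f =O[atTop] fun x : ℝ => x ^ (-(0 : ℝ)) :=
    .of_bound C (Eventually.of_forall fun x => by simpa using hC x)
  have hbot : f =O[𝓝[>] 0] fun x : ℝ => x ^ (-(-s.re - 1)) := by
    have hzero : f =ᶠ[𝓝[>] 0] 0 := by
      filter_upwards [mem_nhdsWithin_of_mem_nhds (Iio_mem_nhds one_pos)] with x hx
      exact hsupp x (Set.mem_Iio.1 hx).le
    exact hzero.trans_isBigO (isBigO_zero _ _)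
  exact (mellin_differentiableAt_of_isBigO_rpow (s := -s) hloc htop (by simpa using hs) hbot
    (by simp)).comp s (differentiableAt_id.neg)

theorem holomorphicWithGrowth_mellin_neg (hf : AEStronglyMeasurable f) (hC : ∀ x, ‖f x‖ ≤ C)
    (hsupp : ∀ x ≤ 1, f x = 0) {θ : ℝ} (hθ : 0 < θ) :
    HolomorphicWithGrowth (fun s => mellin f (-s)) (Set.Ici θ) 0 := by
  have hC0 : 0 ≤ C := (norm_nonneg _).trans (hC 0)
  refine .of_norm_le (C := C / θ)
    (fun hs => differentiableAt_mellin_neg hf hC hsupp (hθ.trans_le hs)) fun {s} hs => ?_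
  rw [Real.rpow_zero, mul_one]
  exact (norm_mellin_neg_le hC hsupp (hθ.trans_le hs)).trans
    (div_le_div_of_nonneg_left hC0 hθ hs)

end MellinOfBounded

section Zeta

variable {s : ℂ} {θ : ℝ}

/-- The fractional part on `(1, ∞)`, extended by zero; its Mellin transform continues `ζ` to
`0 < re s`. -/
noncomputable def fractTail : ℝ → ℂ := (Set.Ioi 1).indicator fun x => ((Int.fract x : ℝ) : ℂ)

theorem fractTail_of_le_one : ∀ x ≤ 1, fractTail x = 0 := fun _ hx =>
  Set.indicator_of_notMem (not_lt.2 hx) _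

theorem norm_fractTail_le_one (x : ℝ) : ‖fractTail x‖ ≤ 1 := by
  refine (norm_indicator_le_norm_self _ x).trans ?_
  rw [norm_real, Real.norm_of_nonneg (Int.fract_nonneg x)]
  exact (Int.fract_lt_one x).le

theorem measurable_fractTail : Measurable fractTail :=
  (measurable_ofReal.comp measurable_fract).indicator measurableSet_Ioi

theorem riemannZeta₁_eq_mul (hs : s ≠ 1) : riemannZeta₁ s = (s - 1) * riemannZeta s := by
  rw [riemannZeta_eq_inv_sub_mul hs, mul_inv_cancel_left₀ (sub_ne_zero.2 hs)]

theorem integral_sum_one_mul_cpow (hs : 1 < s.re) :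
    ∫ t in Set.Ioi (1 : ℝ), (∑ k ∈ Finset.Icc 1 ⌊t⌋₊, (1 : ℕ → ℂ) k) * (t : ℂ) ^ (-(s + 1)) =
      1 / (s - 1) - mellin fractTail (-s) := by
  have hpow : IntegrableOn (fun t : ℝ => (t : ℂ) ^ (-s)) (Set.Ioi 1) :=
    integrableOn_Ioi_cpow_of_lt (by simpa using hs) one_pos
  have hfract : IntegrableOn (fun t : ℝ => (t : ℂ) ^ (-s - 1) * fractTail t) (Set.Ioi 1) := by
    refine ((integrableOn_Ioi_rpow_neg_sub_one (by linarith : 0 < s.re)).mul_const 1).mono' ?_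
      (ae_restrict_of_forall_mem measurableSet_Ioi fun x hx =>
        norm_cpow_neg_sub_one_mul_le norm_fractTail_le_one (one_pos.trans hx) s)
    exact ((measurable_ofReal.pow_const _).mul measurable_fractTail).aestronglyMeasurable
  have hpow_value : ∫ t in Set.Ioi (1 : ℝ), (t : ℂ) ^ (-s) = 1 / (s - 1) := by
    rw [integral_Ioi_cpow_of_lt (by simpa using hs) one_pos, ofReal_one, one_cpow,
      ← neg_div_neg_eq, neg_neg]
    congr 1
    ring
  rw [mellin_neg_eq_integral_Ioi_one fractTail_of_le_one, ← hpow_value, ← integral_sub hpow hfract]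
  refine setIntegral_congr_fun measurableSet_Ioi fun t ht => ?_
  have ht0 : (t : ℂ) ≠ 0 := by exact_mod_cast (one_pos.trans (Set.mem_Ioi.1 ht)).ne'
  have hfloor : ((⌊t⌋₊ : ℕ) : ℂ) = t - Int.fract t := by
    rw [← ofReal_natCast, natCast_floor_eq_intCast_floor (by linarith [Set.mem_Ioi.1 ht]),
      ← Int.self_sub_fract, ofReal_sub]
  have hcpow : (t : ℂ) ^ (-s) = t * (t : ℂ) ^ (-s - 1) := by
    rw [cpow_sub _ _ ht0, cpow_one, mul_div_cancel₀ _ ht0]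
  simp only [Pi.one_apply, Finset.sum_const, Nat.card_Icc, add_tsub_cancel_right, nsmul_eq_mul,
    mul_one, fractTail, Set.indicator_of_mem ht, hfloor, hcpow, neg_add']
  ring

theorem riemannZeta₁_eq_of_one_lt_re (hs : 1 < s.re) :
    riemannZeta₁ s = s - s * (s - 1) * mellin fractTail (-s) := by
  have hs1 : s ≠ 1 := by rintro rfl; simp at hs
  have hpartial : (fun n => ∑ k ∈ Finset.Icc 1 n, (1 : ℕ → ℂ) k) =O[atTop]
      fun n : ℕ => (n : ℝ) ^ (1 : ℝ) := .of_bound 1 (Eventually.of_forall fun n => by simp)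
  have hseries := LSeries_eq_mul_integral 1 zero_le_one hs (LSeriesSummable_one_iff.2 hs) hpartial
  rw [riemannZeta₁_eq_mul hs1, ← LSeries_one_eq_riemannZeta hs, hseries,
    integral_sum_one_mul_cpow hs]
  field_simp [sub_ne_zero.2 hs1]

theorem riemannZeta₁_eq_of_re_pos (hs : 0 < s.re) :
    riemannZeta₁ s = s - s * (s - 1) * mellin fractTail (-s) := by
  have hopen (a : ℝ) : IsOpen {s : ℂ | a < s.re} := isOpen_lt continuous_const continuous_re
  have hmellin : AnalyticOnNhd ℂ (fun s => s - s * (s - 1) * mellin fractTail (-s))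
      {s : ℂ | 0 < s.re} := by
    refine DifferentiableOn.analyticOnNhd (fun s hs => ?_) (hopen 0)
    have := differentiableAt_mellin_neg measurable_fractTail.aestronglyMeasurable
      norm_fractTail_le_one fractTail_of_le_one hs
    exact (differentiableAt_id.sub
      ((differentiableAt_id.mul (by fun_prop)).mul this)).differentiableWithinAt
  refine (differentiable_riemannZeta₁.differentiableOn.analyticOnNhd
    (hopen 0)).eqOn_of_preconnected_of_eventuallyEq hmellin
    (convex_halfSpace_re_gt 0).isPreconnected (z₀ := 2) (by simp) ?_ hs
  filter_upwards [(hopen 1).mem_nhds (by simp : (1 : ℝ) < (2 : ℂ).re)] with s hs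
    using riemannZeta₁_eq_of_one_lt_re hs

theorem holomorphicWithGrowth_id (J : Set ℝ) : HolomorphicWithGrowth (fun s => s) J 1 :=
  .of_norm_le (C := 1) (fun _ => differentiableAt_id) fun {s} _ => by simp

theorem holomorphicWithGrowth_riemannZeta₁ (hθ : 0 < θ) :
    HolomorphicWithGrowth riemannZeta₁ (Set.Ici θ) 2 := by
  have hM := holomorphicWithGrowth_mellin_neg measurable_fractTail.aestronglyMeasurable
    norm_fractTail_le_one fractTail_of_le_one hθ
  have hid := holomorphicWithGrowth_id (Set.Ici θ)
  have hone := (HolomorphicWithGrowth.const (J := Set.Ici θ) 1).mono_exponent zero_le_one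
  have hprod := (hid.mul (hid.sub hone)).mul hM
  norm_num at hprod
  refine ⟨fun _ => differentiable_riemannZeta₁ _, ((hid.mono_exponent one_le_two).sub
    hprod).isBigO.congr' ?_ .rfl⟩
  filter_upwards [mem_principal_self _] with s hs
    using (riemannZeta₁_eq_of_re_pos (hθ.trans_le hs)).symm

theorem norm_riemannZeta_sub_one_le (hs : 2 ≤ s.re) :
    ‖riemannZeta s - 1‖ ≤ Real.pi ^ 2 / 6 - 1 := by
  have hs1 : 1 < s.re := by linarith
  have hsum : Summable fun n : ℕ => 1 / ((n : ℂ) + 1) ^ s := by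
    simpa using (summable_nat_add_iff 1).2 (summable_one_div_nat_cpow.2 hs1)
  have htail : HasSum (fun n : ℕ => 1 / ((n : ℝ) + 2) ^ 2) (Real.pi ^ 2 / 6 - 1) := by
    simpa [Finset.sum_range_succ] using (hasSum_nat_add_iff' 2).2 hasSum_zeta_two
  rw [zeta_eq_tsum_one_div_nat_add_one_cpow hs1, hsum.tsum_eq_zero_add, CharP.cast_eq_zero,
    zero_add, one_cpow, div_one, add_sub_cancel_left]
  refine tsum_of_norm_bounded htail fun n => ?_
  have hcast : ((n + 1 : ℕ) : ℂ) + 1 = ((n + 2 : ℝ) : ℂ) := by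
    push_cast
    ring
  rw [norm_div, norm_one, hcast, norm_cpow_eq_rpow_re_of_pos (by positivity), ← Real.rpow_two]
  gcongr
  linarith [(Nat.cast_nonneg n : (0 : ℝ) ≤ n)]

theorem one_quarter_le_norm_riemannZeta₁ (hs : 2 ≤ s.re) : 1 / 4 ≤ ‖riemannZeta₁ s‖ := by
  have hs1 : s ≠ 1 := by rintro rfl; norm_num at hs
  have hfactor : 1 ≤ ‖s - 1‖ := by
    have := re_le_norm (s - 1)
    rw [sub_re, one_re] at this
    linarith
  have hzeta : 1 / 4 ≤ ‖riemannZeta s‖ := by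
    have := norm_sub_norm_le 1 (1 - riemannZeta s)
    rw [sub_sub_cancel, norm_one, norm_sub_rev] at this
    nlinarith [norm_riemannZeta_sub_one_le hs, Real.pi_lt_d2, Real.pi_pos]
  rw [riemannZeta₁_eq_mul hs1, norm_mul]
  nlinarith

end Zeta

section LogarithmOnBall

variable {F : ℂ → ℂ} {R M r ρ : ℝ} {p w : ℂ}

theorem exists_log_on_ball (hF : DifferentiableOn ℂ F (Metric.ball p R))
    (hne : ∀ z ∈ Metric.ball p R, F z ≠ 0) :
    ∃ L : ℂ → ℂ, L p = 0 ∧ (∀ z ∈ Metric.ball p R, HasDerivAt L (logDeriv F z) z) ∧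
      ∀ z ∈ Metric.ball p R, F z = F p * exp (L z) := by
  have hlogDeriv : DifferentiableOn ℂ (logDeriv F) (Metric.ball p R) :=
    (hF.deriv Metric.isOpen_ball).div hF hne
  obtain ⟨L, hLp, hL⟩ := hlogDeriv.isExactOn_ball.with_val_at p 0
  refine ⟨L, hLp, hL, fun z hz => ?_⟩
  have hderiv (y : ℂ) (hy : y ∈ Metric.ball p R) :
      HasDerivAt (fun z => F z * exp (-L z)) 0 y := by
    have hFy := (hF.differentiableAt (Metric.isOpen_ball.mem_nhds hy)).hasDerivAt
    refine (hFy.mul (hL y hy).neg.cexp).congr_deriv ?_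
    rw [logDeriv_apply]
    field_simp [hne y hy]
    ring
  have hconst := Metric.isOpen_ball.is_const_of_deriv_eq_zero (convex_ball p R).isPreconnected
    (fun y hy => (hderiv y hy).differentiableAt.differentiableWithinAt)
    (fun y hy => (hderiv y hy).deriv) hz
    (Metric.mem_ball_self (Metric.pos_of_mem_ball hz))
  simp only [hLp, neg_zero, exp_zero, mul_one] at hconst
  rw [← hconst, mul_assoc, ← exp_add, neg_add_cancel, exp_zero, mul_one]

theorem exists_bounded_log_on_ball (hF : DifferentiableOn ℂ F (Metric.ball p R))
    (hne : ∀ z ∈ Metric.ball p R, F z ≠ 0) (hM : 0 < M)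
    (hbound : ∀ z ∈ Metric.ball p R, ‖F z‖ ≤ Real.exp M * ‖F p‖) :
    ∃ L : ℂ → ℂ, (∀ z ∈ Metric.ball p R, HasDerivAt L (logDeriv F z) z) ∧
      (∀ z ∈ Metric.ball p R, F z = F p * exp (L z)) ∧
      ∀ z ∈ Metric.ball p R, ‖L z‖ ≤ 2 * M * ‖z - p‖ / (R - ‖z - p‖) := by
  obtain ⟨L, hLp, hL, hexp⟩ := exists_log_on_ball hF hne
  refine ⟨L, hL, hexp, fun z hz => ?_⟩
  have hR := Metric.pos_of_mem_ball hz
  have hFp : 0 < ‖F p‖ := norm_pos_iff.2 (hne p (Metric.mem_ball_self hR))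
  have hmem {y : ℂ} (hy : y ∈ Metric.ball 0 R) : p + y ∈ Metric.ball p R := by simpa using hy
  have hshift := borelCaratheodory_zero (f := fun y => L (p + y)) (R := R) (z := z - p) hM
    (fun y hy => ((hL _ (hmem hy)).differentiableAt.comp y
      (by fun_prop : DifferentiableAt ℂ (fun y => p + y) y)).differentiableWithinAt)
    (fun y hy => ?_) hR (by simpa [dist_eq_norm] using hz) (by simpa using hLp)
  · simpa using hshift
  · have := hbound _ (hmem hy)
    rw [hexp _ (hmem hy), norm_mul, norm_exp, mul_comm] at this
    exact Real.exp_le_exp.1 (le_of_mul_le_mul_right this hFp)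

theorem norm_logDeriv_le_and_le_norm_of_bound
    (hF : DifferentiableOn ℂ F (Metric.ball p (r + 2 * ρ)))
    (hne : ∀ z ∈ Metric.ball p (r + 2 * ρ), F z ≠ 0) (hM : 0 < M)
    (hbound : ∀ z ∈ Metric.ball p (r + 2 * ρ), ‖F z‖ ≤ Real.exp M * ‖F p‖)
    (hr : 0 ≤ r) (hρ : 0 < ρ) (hw : ‖w - p‖ ≤ r) :
    ‖logDeriv F w‖ ≤ 2 * (r + ρ) / ρ / ρ * M ∧
      ‖F p‖ * Real.exp (-(2 * (r + ρ) / ρ * M)) ≤ ‖F w‖ := by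
  obtain ⟨L, hL, hexp, hLbound⟩ := exists_bounded_log_on_ball hF hne hM hbound
  have hmem {z : ℂ} (hz : ‖z - p‖ ≤ r + ρ) : z ∈ Metric.ball p (r + 2 * ρ) := by
    rw [mem_ball_iff_norm]
    linarith
  have hLle {z : ℂ} (hz : ‖z - p‖ ≤ r + ρ) : ‖L z‖ ≤ 2 * (r + ρ) / ρ * M := by
    refine (hLbound z (hmem hz)).trans ?_
    rw [div_mul_eq_mul_div, mul_right_comm]
    gcongr
    linarith
  have hball {z : ℂ} (hz : ‖z - w‖ ≤ ρ) : ‖z - p‖ ≤ r + ρ := by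
    linarith [norm_sub_le_norm_sub_add_norm_sub z w p]
  have hwr : ‖w - p‖ ≤ r + ρ := by linarith
  constructor
  · rw [← (hL w (hmem hwr)).deriv, div_mul_eq_mul_div _ ρ]
    refine norm_deriv_le_of_forall_mem_sphere_norm_le hρ
      (DifferentiableOn.diffContOnCl fun z hz => ?_)
      fun z hz => hLle (hball (mem_sphere_iff_norm.1 hz).le)
    rw [closure_ball _ hρ.ne'] at hz
    exact (hL z (hmem (hball (mem_closedBall_iff_norm.1 hz)))).differentiableAt
      |>.differentiableWithinAt
  · rw [hexp w (hmem hwr), norm_mul, norm_exp]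
    gcongr
    exact neg_le_of_abs_le ((abs_re_le_norm _).trans (hLle hwr))

end LogarithmOnBall

namespace HolomorphicWithGrowth

variable {f : ℂ → ℂ} {J : Set ℝ} {b c T β ε σ θ : ℝ}

theorem exists_bound_of_norm_sub_le (hf : HolomorphicWithGrowth f J β) (hβ : 0 ≤ β) (hT : 0 ≤ T) :
    ∃ C, 0 < C ∧ ∀ s z : ℂ, z.re ∈ J → ‖z - s‖ ≤ T → ‖f z‖ ≤ C * (1 + ‖s‖) ^ β := by
  obtain ⟨C, hC, hbound⟩ := hf.exists_bound
  refine ⟨C * (1 + T) ^ β, by positivity, fun s z hz hzs => (hbound z hz).trans ?_⟩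
  rw [mul_assoc, ← Real.mul_rpow (by positivity) (by positivity)]
  gcongr
  nlinarith [norm_le_norm_sub_add z s, norm_nonneg s]

theorem exists_log_bound (hf : HolomorphicWithGrowth f (Set.Ioi θ) β) (hβ : 0 ≤ β)
    (hne : ∀ s : ℂ, θ < s.re → f s ≠ 0) (hc : 0 < c) (hlow : ∀ s : ℂ, b ≤ s.re → c ≤ ‖f s‖)
    (hσ : θ < σ) :
    ∃ D A : ℝ, 1 < D ∧ 0 < A ∧ ∀ s : ℂ, σ ≤ s.re →
      ‖logDeriv f s‖ ≤ A * Real.log (D * (1 + ‖s‖) ^ β) ∧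
      c * Real.exp (-(A * Real.log (D * (1 + ‖s‖) ^ β))) ≤ ‖f s‖ := by
  set r := max (b - σ) 0
  set ρ := (σ - θ) / 2 with hρ_def
  have hr : 0 ≤ r := le_max_right _ _
  have hρ : 0 < ρ := by linarith
  obtain ⟨C, hC, hbound⟩ := hf.exists_bound_of_norm_sub_le hβ (by positivity : 0 ≤ 2 * r + 2 * ρ)
  have hA₁ : 0 < 2 * (r + ρ) / ρ / ρ := by positivity
  have hA₂ : 0 < 2 * (r + ρ) / ρ := by positivity
  refine ⟨1 + C / c, 2 * (r + ρ) / ρ / ρ + 2 * (r + ρ) / ρ, lt_add_of_pos_right _ (by positivity),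
    by positivity, fun s hs => ?_⟩
  have hpow : 1 ≤ (1 + ‖s‖) ^ β := Real.one_le_rpow (by linarith [norm_nonneg s]) hβ
  set Y := (1 + C / c) * (1 + ‖s‖) ^ β with hY_def
  have hY : 1 < Y := by nlinarith [(by positivity : 0 < C / c)]
  have hcentre : c ≤ ‖f (s + r)‖ := hlow _ <| by
    rw [add_re, ofReal_re]
    linarith [le_max_left (b - σ) 0]
  have hhalf {z : ℂ} (hz : z ∈ Metric.ball (s + r : ℂ) (r + 2 * ρ)) : θ < z.re := by
    have := neg_le_of_abs_le (abs_re_le_norm (z - (s + r)))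
    rw [sub_re, add_re, ofReal_re] at this
    linarith [mem_ball_iff_norm.1 hz]
  have hratio (z : ℂ) (hz : z ∈ Metric.ball (s + r : ℂ) (r + 2 * ρ)) :
      ‖f z‖ ≤ Real.exp (Real.log Y) * ‖f (s + r)‖ := by
    have hdist : ‖z - s‖ ≤ 2 * r + 2 * ρ := by
      have := norm_sub_le_norm_sub_add_norm_sub z (s + r) s
      rw [add_sub_cancel_left, norm_real, Real.norm_of_nonneg hr] at this
      linarith [mem_ball_iff_norm.1 hz]
    calc ‖f z‖ ≤ C / c * (1 + ‖s‖) ^ β * c := by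
          rw [mul_right_comm, div_mul_cancel₀ _ hc.ne']
          exact hbound s z (hhalf hz) hdist
      _ ≤ Real.exp (Real.log Y) * ‖f (s + r)‖ := by
          rw [Real.exp_log (by linarith), hY_def]
          gcongr
          linarith
  obtain ⟨hlogDeriv, hlower⟩ := norm_logDeriv_le_and_le_norm_of_bound (w := s)
    (fun z hz => (hf.differentiableAt (hhalf hz)).differentiableWithinAt)
    (fun z hz => hne z (hhalf hz)) (Real.log_pos hY) hratio hr hρ (by simp [abs_of_nonneg hr])
  have hlogY := Real.log_pos hY
  refine ⟨hlogDeriv.trans (by gcongr; linarith), le_trans ?_ hlower⟩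
  gcongr
  linarith

theorem logDeriv (hf : HolomorphicWithGrowth f (Set.Ioi θ) β) (hβ : 0 ≤ β)
    (hne : ∀ s : ℂ, θ < s.re → f s ≠ 0) (hc : 0 < c) (hlow : ∀ s : ℂ, b ≤ s.re → c ≤ ‖f s‖)
    (hσ : θ < σ) (hε : 0 < ε) : HolomorphicWithGrowth (logDeriv f) (Set.Ici σ) ε := by
  obtain ⟨D, A, hD, hA, hbound⟩ := hf.exists_log_bound hβ hne hc hlow hσ
  refine .of_norm_le (C := A * (Real.log D + β / ε)) (fun {s} hs => ?_) fun {s} hs => ?_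
  · have hopen : IsOpen {s : ℂ | θ < s.re} := isOpen_lt continuous_const continuous_re
    have hs' : θ < s.re := hσ.trans_le hs
    have hf' : DifferentiableOn ℂ f {s : ℂ | θ < s.re} := fun z hz =>
      (hf.differentiableAt hz).differentiableWithinAt
    exact ((hf'.deriv hopen).differentiableAt (hopen.mem_nhds hs')).div
      (hf.differentiableAt hs') (hne s hs')
  · have hbase : 0 < 1 + ‖s‖ := by positivity
    have hpow : 1 ≤ (1 + ‖s‖) ^ ε := Real.one_le_rpow (by linarith [norm_nonneg s]) hε.le
    calc ‖_root_.logDeriv f s‖ ≤ A * Real.log (D * (1 + ‖s‖) ^ β) := (hbound s hs).1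
      _ = A * (Real.log D + β * Real.log (1 + ‖s‖)) := by
        rw [Real.log_mul (by positivity) (by positivity), Real.log_rpow hbase]
      _ ≤ A * (Real.log D * (1 + ‖s‖) ^ ε + β * ((1 + ‖s‖) ^ ε / ε)) := by
        gcongr
        · exact le_mul_of_one_le_right (Real.log_pos hD).le hpow
        · exact Real.log_le_rpow_div hbase.le hε
      _ = A * (Real.log D + β / ε) * (1 + ‖s‖) ^ ε := by ring

theorem exists_inv (hf : HolomorphicWithGrowth f (Set.Ioi θ) β) (hβ : 0 ≤ β)
    (hne : ∀ s : ℂ, θ < s.re → f s ≠ 0) (hc : 0 < c) (hlow : ∀ s : ℂ, b ≤ s.re → c ≤ ‖f s‖)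
    (hσ : θ < σ) : ∃ α, HolomorphicWithGrowth (fun s => (f s)⁻¹) (Set.Ici σ) α := by
  obtain ⟨D, A, hD, -, hbound⟩ := hf.exists_log_bound hβ hne hc hlow hσ
  refine ⟨β * A, .of_norm_le (C := D ^ A / c)
    (fun hs => (hf.differentiableAt (hσ.trans_le hs)).inv (hne _ (hσ.trans_le hs)))
    fun {s} hs => ?_⟩
  have hY : 0 < D * (1 + ‖s‖) ^ β := by positivity
  have hlower := (hbound s hs).2
  rw [mul_comm A, Real.exp_neg, ← Real.rpow_def_of_pos hY, Real.mul_rpow (by positivity)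
    (by positivity), ← Real.rpow_mul (by positivity)] at hlower
  rw [norm_inv]
  refine (inv_anti₀ (by positivity) hlower).trans_eq ?_
  rw [mul_inv, inv_inv]
  ring

end HolomorphicWithGrowth

theorem tendsto_deriv_of_norm_le {F : ℕ → ℂ → ℂ} {f : ℂ → ℂ} {U : Set ℂ} {c : ℂ} {r C : ℝ}
    (hU : IsOpen U) (hr : 0 < r) (hrU : Metric.closedBall c r ⊆ U) (hf : DifferentiableOn ℂ f U)
    (hF : ∀ᶠ n in atTop, DifferentiableOn ℂ (F n) U)
    (hC : ∀ᶠ n in atTop, ∀ z ∈ Metric.sphere c r, ‖F n z‖ ≤ C)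
    (hlim : ∀ z ∈ Metric.sphere c r, Tendsto (fun n => F n z) atTop (𝓝 (f z))) :
    Tendsto (fun n => deriv (F n) c) atTop (𝓝 (deriv f c)) := by
  rw [← cderiv_eq_deriv hU hf hr hrU]
  refine Tendsto.congr' (hF.mono fun n hn => cderiv_eq_deriv hU hn hr hrU) ?_
  refine Tendsto.const_smul ?_ _
  have hmem (θ : ℝ) : circleMap c r θ ∈ Metric.sphere c r := circleMap_mem_sphere c hr.le θ
  refine intervalIntegral.tendsto_integral_filter_of_dominated_convergence
    (fun _ => r * ((r ^ 2)⁻¹ * C)) ?_ ?_ intervalIntegrable_const ?_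
  · filter_upwards [hF] with n hn
    have hcont : Continuous fun θ => F n (circleMap c r θ) :=
      hn.continuousOn.comp_continuous (continuous_circleMap c r)
        fun θ => hrU (Metric.sphere_subset_closedBall (hmem θ))
    have hne (θ : ℝ) : (circleMap c r θ - c) ^ 2 ≠ 0 :=
      pow_ne_zero 2 (sub_ne_zero.2 (circleMap_ne_center hr.ne'))
    simp only [deriv_circleMap, smul_eq_mul]
    exact (((continuous_circleMap 0 r).mul continuous_const).mul
      ((((continuous_circleMap c r).sub continuous_const).pow 2 |>.inv₀ hne).mul
        hcont)).aestronglyMeasurable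
  · filter_upwards [hC] with n hn
    refine ae_of_all _ fun θ _ => ?_
    simp only [deriv_circleMap, smul_eq_mul, norm_mul, norm_inv, norm_pow, norm_I, mul_one,
      norm_circleMap_zero, circleMap_sub_center, abs_of_pos hr]
    gcongr
    exact hn _ (hmem θ)
  · exact ae_of_all _ fun θ _ => ((hlim _ (hmem θ)).const_smul _).const_smul _

theorem norm_GammaSeq_le {s : ℂ} (hs : 0 < s.re) {n : ℕ} (hn : n ≠ 0) :
    ‖GammaSeq s n‖ ≤ Real.Gamma s.re := by
  have hpos (j : ℕ) : 0 < s.re + j := by positivity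
  have hlog : Real.BohrMollerup.logGammaSeq s.re n ≤ Real.log (Real.Gamma s.re) := by
    have := Real.BohrMollerup.ge_logGammaSeq Real.convexOn_log_Gamma
      (fun {y} hy => by
        rw [Function.comp_apply, Real.Gamma_add_one hy.ne',
          Real.log_mul hy.ne' (Real.Gamma_pos_of_pos hy).ne', add_comm, Function.comp_apply]) hs hn
    simpa using this
  have hexp : Real.exp (Real.BohrMollerup.logGammaSeq s.re n) =
      (n : ℝ) ^ s.re * n.factorial / ∏ j ∈ Finset.range (n + 1), (s.re + j) := by
    rw [Real.BohrMollerup.logGammaSeq, Real.exp_sub, Real.exp_add, Real.exp_sum,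
      Real.exp_log (by positivity), mul_comm s.re, ← Real.rpow_def_of_pos (by positivity)]
    simp_rw [Real.exp_log (hpos _)]
  rw [Real.le_log_iff_exp_le (Real.Gamma_pos_of_pos hs), hexp] at hlog
  refine le_trans ?_ hlog
  rw [GammaSeq, norm_div, norm_mul, norm_prod, norm_natCast_cpow_of_pos (Nat.pos_of_ne_zero hn),
    norm_natCast]
  gcongr with j
  simpa using re_le_norm (s + j)

theorem add_natCast_ne_zero_of_re_pos {s : ℂ} (hs : 0 < s.re) (j : ℕ) : s + j ≠ 0 := fun h => by
  have := congrArg re h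
  simp only [add_re, natCast_re, zero_re] at this
  linarith [j.cast_nonneg (α := ℝ)]

theorem differentiableAt_Gamma_of_re_pos {s : ℂ} (hs : 0 < s.re) : DifferentiableAt ℂ Gamma s :=
  differentiableAt_Gamma s fun m h =>
    add_natCast_ne_zero_of_re_pos hs m (by rw [h, neg_add_cancel])

theorem differentiableAt_GammaSeq {s : ℂ} (hs : 0 < s.re) {n : ℕ} (hn : n ≠ 0) :
    DifferentiableAt ℂ (GammaSeq · n) s := by
  have hn' : (n : ℂ) ≠ 0 := Nat.cast_ne_zero.2 hn
  have hprod : ∏ j ∈ Finset.range (n + 1), (s + j) ≠ 0 :=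
    Finset.prod_ne_zero_iff.2 fun j _ => add_natCast_ne_zero_of_re_pos hs j
  unfold GammaSeq
  fun_prop (disch := first | assumption | exact Or.inl hn')

theorem logDeriv_GammaSeq {s : ℂ} (hs : 0 < s.re) {n : ℕ} (hn : n ≠ 0) :
    logDeriv (GammaSeq · n) s = log n - ∑ j ∈ Finset.range (n + 1), 1 / (s + j) := by
  have hn' : (n : ℂ) ≠ 0 := Nat.cast_ne_zero.2 hn
  have hprod : ∏ j ∈ Finset.range (n + 1), (s + j) ≠ 0 :=
    Finset.prod_ne_zero_iff.2 fun j _ => add_natCast_ne_zero_of_re_pos hs j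
  have hpow : HasDerivAt (fun z : ℂ => (n : ℂ) ^ z) ((n : ℂ) ^ s * log n) s := by
    simpa using (hasDerivAt_id s).const_cpow (Or.inl hn')
  have hfact : (n.factorial : ℂ) ≠ 0 := Nat.cast_ne_zero.2 n.factorial_ne_zero
  have hpow' : (n : ℂ) ^ s ≠ 0 := by simp [cpow_eq_zero_iff, hn]
  unfold GammaSeq
  rw [logDeriv_div (f := fun z : ℂ => (n : ℂ) ^ z * n.factorial) s
      (mul_ne_zero hpow' hfact) hprod (hpow.differentiableAt.mul_const _) (by fun_prop),
    logDeriv_mul_const s _ hfact, logDeriv_apply, hpow.deriv,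
    logDeriv_prod (fun j _ => add_natCast_ne_zero_of_re_pos hs j) fun j _ => by fun_prop]
  congr 1
  · field_simp
  · simp [logDeriv_apply]

theorem tendsto_logDeriv_GammaSeq {s : ℂ} (hs : 0 < s.re) :
    Tendsto (fun n => logDeriv (GammaSeq · n) s) atTop (𝓝 (digamma s)) := by
  have hre {z : ℂ} (hz : z ∈ Metric.closedBall s (s.re / 2)) : 0 < z.re := by
    have := (abs_re_le_norm (s - z)).trans (by simpa [dist_eq_norm, norm_sub_rev] using hz)
    rw [sub_re] at this
    linarith [le_abs_self (s.re - z.re)]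
  obtain ⟨C, hC⟩ := (isCompact_closedBall s (s.re / 2)).bddAbove_image
    (f := Real.Gamma ∘ re) fun z hz =>
      ((Real.differentiableAt_Gamma fun m h => by
        linarith [hre hz, m.cast_nonneg (α := ℝ)]).continuousAt.comp
        continuous_re.continuousAt).continuousWithinAt
  refine Tendsto.div ?_ (GammaSeq_tendsto_Gamma s) (Gamma_ne_zero_of_re_pos hs)
  refine tendsto_deriv_of_norm_le (C := C) (isOpen_lt continuous_const continuous_re)
    (half_pos hs) (fun z hz => hre hz)
    (fun z hz => (differentiableAt_Gamma_of_re_pos hz).differentiableWithinAt) ?_ ?_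
    fun z _ => GammaSeq_tendsto_Gamma z
  · filter_upwards [eventually_ne_atTop 0] with n hn z hz
    exact (differentiableAt_GammaSeq hz hn).differentiableWithinAt
  · filter_upwards [eventually_ne_atTop 0] with n hn z hz
    have hz' := Metric.sphere_subset_closedBall hz
    exact (norm_GammaSeq_le (hre hz') hn).trans (hC (Set.mem_image_of_mem _ hz'))

theorem tendsto_sum_digamma_one_add {w : ℂ} (hw : -1 < w.re) :
    Tendsto (fun n : ℕ => ∑ j ∈ Finset.range n, (1 / (j + 1 : ℂ) - 1 / (j + 1 + w))) atTop
      (𝓝 (digamma (1 + w) + Real.eulerMascheroniConstant)) := by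
  have hdigamma := tendsto_logDeriv_GammaSeq (s := 1 + w) (by rw [add_re, one_re]; linarith)
  have hlog : Tendsto (fun n : ℕ => ((harmonic n - Real.log n : ℝ) : ℂ) + 1 / ((n : ℂ) + 1)) atTop
      (𝓝 Real.eulerMascheroniConstant) := by
    simpa using ((continuous_ofReal.tendsto _).comp Real.tendsto_harmonic_sub_log).add
      (tendsto_one_div_add_atTop_nhds_zero_nat (𝕜 := ℂ))
  refine (tendsto_add_atTop_iff_nat 1).1 ((hdigamma.add hlog).congr' ?_)
  filter_upwards [eventually_ne_atTop 0] with n hn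
  rw [logDeriv_GammaSeq (by rw [add_re, one_re]; linarith) hn, Finset.sum_sub_distrib,
    Finset.sum_range_succ (fun j : ℕ => 1 / (j + 1 : ℂ))]
  simp only [harmonic, Rat.cast_sum, Rat.cast_inv, one_div]
  push_cast
  simp_rw [add_comm (1 : ℂ) w, add_comm (_ + 1 : ℂ) w, add_assoc, add_comm (1 : ℂ)]
  ring

theorem norm_one_div_sub_one_div_add_le {w : ℂ} (hw : 0 ≤ w.re) (j : ℕ) :
    ‖1 / (j + 1 : ℂ) - 1 / (j + 1 + w)‖ ≤ ‖w‖ ^ (1 / 2 : ℝ) * (1 / (j + 1 : ℝ) ^ (3 / 2 : ℝ)) := by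
  have hj : (0 : ℝ) < j + 1 := by positivity
  have hnorm : ‖(j + 1 : ℂ)‖ = j + 1 := by exact_mod_cast norm_natCast (j + 1)
  have hre : (j + 1 : ℝ) ≤ ‖(j + 1 + w : ℂ)‖ := by
    have := re_le_norm (j + 1 + w : ℂ)
    simp only [add_re, natCast_re, one_re] at this
    linarith
  have hle : ‖w‖ ≤ ‖(j + 1 + w : ℂ)‖ := by
    rw [← sq_le_sq₀ (norm_nonneg _) (norm_nonneg _), ← normSq_eq_norm_sq, ← normSq_eq_norm_sq,
      normSq_apply, normSq_apply]
    simp only [add_re, natCast_re, one_re, add_im, natCast_im, one_im, zero_add]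
    nlinarith
  have hmid : ‖w‖ ^ (1 / 2 : ℝ) * (j + 1 : ℝ) ^ (1 / 2 : ℝ) ≤ ‖(j + 1 + w : ℂ)‖ := by
    calc _ ≤ ‖(j + 1 + w : ℂ)‖ ^ (1 / 2 : ℝ) * ‖(j + 1 + w : ℂ)‖ ^ (1 / 2 : ℝ) := by gcongr
      _ = ‖(j + 1 + w : ℂ)‖ := by rw [← Real.rpow_add (hj.trans_le hre)]; norm_num
  have hne₁ : (j + 1 : ℂ) ≠ 0 := norm_pos_iff.1 (hnorm ▸ hj)
  have hne₂ : (j + 1 + w : ℂ) ≠ 0 := norm_pos_iff.1 (hj.trans_le hre)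
  rw [div_sub_div _ _ hne₁ hne₂, one_mul, mul_one, add_sub_cancel_left, norm_div, norm_mul, hnorm,
    mul_one_div, div_le_div_iff₀ (by positivity) (by positivity),
    show (3 / 2 : ℝ) = 1 + 1 / 2 by norm_num, Real.rpow_add hj, Real.rpow_one]
  calc ‖w‖ * ((j + 1) * (j + 1 : ℝ) ^ (1 / 2 : ℝ))
      = ‖w‖ ^ (1 / 2 : ℝ) * ((j + 1) * (‖w‖ ^ (1 / 2 : ℝ) * (j + 1 : ℝ) ^ (1 / 2 : ℝ))) := by
        rcases eq_or_lt_of_le (norm_nonneg w) with h | h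
        · simp [← h]
        · nth_rw 1 [show ‖w‖ = ‖w‖ ^ (1 / 2 : ℝ) * ‖w‖ ^ (1 / 2 : ℝ) by
            rw [← Real.rpow_add h]; norm_num]
          ring
    _ ≤ _ := by gcongr

theorem hasSum_digamma_one_add {w : ℂ} (hw : 0 ≤ w.re) :
    HasSum (fun j : ℕ => 1 / (j + 1 : ℂ) - 1 / (j + 1 + w))
      (digamma (1 + w) + Real.eulerMascheroniConstant) := by
  have hsum : Summable fun j : ℕ => 1 / (j + 1 : ℝ) ^ (3 / 2 : ℝ) := by
    exact_mod_cast (summable_nat_add_iff 1).2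
      (Real.summable_one_div_nat_rpow.2 (by norm_num : (1 : ℝ) < 3 / 2))
  rw [(Summable.of_norm_bounded (hsum.mul_left _)
    (norm_one_div_sub_one_div_add_le hw)).hasSum_iff_tendsto_nat]
  exact tendsto_sum_digamma_one_add (by linarith)

theorem re_digamma_one_add_nonneg {w : ℂ} (hw : 0 ≤ w.re) :
    0 ≤ (digamma (1 + w) + Real.eulerMascheroniConstant).re := by
  refine (hasSum_re (hasSum_digamma_one_add hw)).nonneg fun j => ?_
  have hnorm : (j + 1 : ℝ) ≤ ‖(j + 1 + w : ℂ)‖ := by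
    have := re_le_norm (j + 1 + w : ℂ)
    simp only [add_re, natCast_re, one_re] at this
    linarith
  have hle : (1 / (j + 1 + w) : ℂ).re ≤ 1 / (j + 1) := by
    refine (re_le_norm _).trans ?_
    rw [norm_div, norm_one]
    gcongr
  have heq : (1 / (j + 1) : ℂ) = (1 / (j + 1) : ℝ) := by push_cast; rfl
  rw [sub_re, heq, ofReal_re]
  linarith

theorem holomorphicWithGrowth_digamma_one_add :
    HolomorphicWithGrowth (fun w => digamma (1 + w) + Real.eulerMascheroniConstant) (Set.Ici 0)
      (1 / 2) := by
  refine .of_norm_le (C := ∑' j : ℕ, 1 / (j + 1 : ℝ) ^ (3 / 2 : ℝ)) (fun {w} hw => ?_)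
    fun {w} hw => ?_
  · have hre : 0 < (1 + w).re := by
      rw [add_re, one_re]
      linarith [Set.mem_Ici.1 hw]
    have han : AnalyticAt ℂ Gamma (1 + w) :=
      DifferentiableOn.analyticAt (s := {z | 0 < z.re})
        (fun z hz => (differentiableAt_Gamma_of_re_pos hz).differentiableWithinAt)
        ((isOpen_lt continuous_const continuous_re).mem_nhds hre)
    have hdigamma : DifferentiableAt ℂ digamma (1 + w) :=
      han.deriv.differentiableAt.div han.differentiableAt (Gamma_ne_zero_of_re_pos hre)
    exact (hdigamma.comp w (by fun_prop)).add_const _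
  · have hsum : Summable fun j : ℕ => 1 / (j + 1 : ℝ) ^ (3 / 2 : ℝ) := by
      exact_mod_cast (summable_nat_add_iff 1).2
        (Real.summable_one_div_nat_rpow.2 (by norm_num : (1 : ℝ) < 3 / 2))
    rw [← (hasSum_digamma_one_add hw).tsum_eq]
    calc _ ≤ _ := tsum_of_norm_bounded (hsum.hasSum.mul_left _)
          (norm_one_div_sub_one_div_add_le hw)
      _ ≤ _ := by
        rw [mul_comm]
        gcongr
        linarith

theorem exists_norm_Gamma_div_Gamma_add_le {a δ : ℝ} (ha : 0 < a) (hδ : 0 < δ) :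
    ∃ C, ∀ s : ℂ, a ≤ s.re → ‖Gamma s / Gamma (s + δ)‖ ≤ C := by
  refine ⟨(∫ t in (0 : ℝ)..1, ‖(t : ℂ) ^ ((a : ℂ) - 1) * (1 - (t : ℂ)) ^ ((δ : ℂ) - 1)‖) /
    ‖Gamma δ‖, fun s hs => ?_⟩
  have hbeta := Gamma_mul_Gamma_eq_betaIntegral (s := s) (t := δ) (by linarith) (by simpa)
  have hne : Gamma (s + δ) ≠ 0 := Gamma_ne_zero_of_re_pos (by simp; linarith)
  have hne' : Gamma (δ : ℂ) ≠ 0 := Gamma_ne_zero_of_re_pos (by simpa)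
  rw [(div_eq_div_iff hne hne').2 (by rw [hbeta]; ring : Gamma s * Gamma δ =
    betaIntegral s δ * Gamma (s + δ)), norm_div]
  gcongr
  refine intervalIntegral.norm_integral_le_of_norm_le zero_le_one (ae_of_all _ fun t ht => ?_)
    (betaIntegral_convergent (by simpa) (by simpa)).norm
  rw [norm_mul, norm_mul, norm_cpow_eq_rpow_re_of_pos ht.1, norm_cpow_eq_rpow_re_of_pos ht.1]
  gcongr ?_ * _
  refine Real.rpow_le_rpow_of_exponent_ge ht.1 ht.2 ?_
  simpa using hs

namespace HolomorphicWithGrowth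

variable {f : ℂ → ℂ} {α σ C : ℝ}

theorem norm_le_of_norm_line_le_of_neg (hf : HolomorphicWithGrowth f (Set.Ici σ) α) (hα : α < 0)
    (h : ∀ t : ℝ, ‖f (σ + t * I)‖ ≤ C) {s : ℂ} (hs : σ ≤ s.re) : ‖f s‖ ≤ C := by
  have hg := (hf.mono_exponent hα.le).comp_mul_add (J' := Set.Ici 0) le_rfl 1 σ (by simp)
  have hhor : Tendsto (fun x : ℝ => f (σ + x)) atTop (𝓝 0) := by
    simpa [Function.comp_def] using
      (hf.tendsto_horizontal hα 0).comp (tendsto_atTop_add_const_left atTop σ tendsto_id)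
  have key := PhragmenLindelof.right_half_plane_of_tendsto_zero_on_real
    (f := fun z => f (σ + z)) (C := C) (z := s - σ) ?_ ⟨0, two_pos, 0, ?_⟩ hhor h (by simpa)
  · simpa using key
  · refine DifferentiableOn.diffContOnCl fun z hz => ?_
    rw [closure_setOfPred_lt_re] at hz
    simpa [add_comm] using (hg.differentiableAt hz).differentiableWithinAt
  · have hle : Bornology.cobounded ℂ ⊓ 𝓟 {z : ℂ | 0 < z.re} ≤ 𝓟 (re ⁻¹' Set.Ici 0) :=
      inf_le_right.trans (principal_mono.2 fun z (hz : 0 < z.re) => hz.le)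
    simpa [add_comm] using hg.isBigO.mono hle

theorem norm_le_of_norm_line_le (hf : HolomorphicWithGrowth f (Set.Ici σ) α)
    (h : ∀ t : ℝ, ‖f (σ + t * I)‖ ≤ C) {s : ℂ} (hs : σ ≤ s.re) : ‖f s‖ ≤ C := by
  obtain ⟨n, hn⟩ := exists_nat_gt α
  have hle {R : ℝ} (hR : 0 < R) :
      ‖f s * (R * (s + (R - σ : ℝ))⁻¹) ^ n‖ ≤ C := by
    have hdecay : HolomorphicWithGrowth (fun s : ℂ => ((R : ℂ) * (s + (R - σ : ℝ))⁻¹) ^ n)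
        (Set.Ici σ) (n * -1) :=
      ((inv_add_const_Ici (by simpa using hR)).const_mul (R : ℂ)).pow n
    refine (hf.mul hdecay).norm_le_of_norm_line_le_of_neg (by linarith) (fun t => ?_) hs
    have hden : R ≤ ‖(σ + t * I + (R - σ : ℝ) : ℂ)‖ := by
      simpa using (σ + t * I + (R - σ : ℝ) : ℂ).re_le_norm
    have hone : ‖(R : ℂ) * (σ + t * I + (R - σ : ℝ))⁻¹‖ ≤ 1 := by
      rw [norm_mul, norm_inv, norm_real, Real.norm_of_nonneg hR.le]
      exact mul_inv_le_one_of_le₀ hden (norm_nonneg _)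
    rw [norm_mul, norm_pow]
    exact (mul_le_of_le_one_right (norm_nonneg _) (pow_le_one₀ (norm_nonneg _) hone)).trans (h t)
  have hlim : Tendsto (fun R : ℝ => (R : ℂ) * (s + (R - σ : ℝ))⁻¹) atTop (𝓝 1) := by
    have hinv : Tendsto (fun R : ℝ => ((s - σ) * (R : ℂ)⁻¹ + 1)⁻¹) atTop (𝓝 1) := by
      have := ((continuous_ofReal.tendsto 0).comp tendsto_inv_atTop_zero).const_mul (s - σ)
      simpa [Function.comp_def] using (this.add_const 1).inv₀ (by simp)
    refine hinv.congr' ?_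
    filter_upwards [eventually_gt_atTop 0] with R hR
    have hR' : (R : ℂ) ≠ 0 := ofReal_ne_zero.2 hR.ne'
    rw [← inv_inv (R : ℂ), ← mul_inv, inv_inv]
    congr 1
    push_cast
    field_simp
    ring
  have hlim' := ((hlim.pow n).const_mul (f s)).norm
  rw [one_pow, mul_one] at hlim'
  refine le_of_tendsto hlim' ?_
  filter_upwards [eventually_gt_atTop 0] with R hR using hle hR

end HolomorphicWithGrowth

theorem re_logDeriv_nonneg_of_norm_sub_le_norm_add {f : ℂ → ℂ} {s : ℂ} (hf : DifferentiableAt ℂ f s)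
    (hne : f s ≠ 0) (h : ∀ᶠ δ : ℝ in 𝓝[>] 0, ‖f (s - δ)‖ ≤ ‖f (s + δ)‖) :
    0 ≤ (logDeriv f s).re := by
  have hplus : HasDerivAt (fun δ : ℝ => f (s + δ)) (deriv f s) 0 := by
    have h1 : HasDerivAt (fun δ : ℂ => f (s + δ)) (deriv f s) ((0 : ℝ) : ℂ) :=
      HasDerivAt.comp_const_add s _ (by simpa using hf.hasDerivAt)
    exact h1.comp_ofReal
  have hminus : HasDerivAt (fun δ : ℝ => f (s - δ)) (-deriv f s) 0 := by
    have h1 : HasDerivAt (fun δ : ℂ => f (s - δ)) (-deriv f s) ((0 : ℝ) : ℂ) :=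
      HasDerivAt.comp_const_sub s _ (by simpa using hf.hasDerivAt)
    exact h1.comp_ofReal
  have hratio :
      HasDerivAt (fun δ : ℝ => (f (s - δ) / f (s + δ)).re) (-2 * (logDeriv f s).re) 0 := by
    have hquot := reCLM.hasFDerivAt.comp_hasDerivAt 0 (hminus.div hplus (by simpa))
    have hval : (-deriv f s * f s - f s * deriv f s) / f s ^ 2 = (-2 : ℝ) * logDeriv f s := by
      rw [logDeriv_apply]
      push_cast
      field_simp
      ring
    rw [← re_ofReal_mul, ← hval]
    simpa [Function.comp_def] using hquot
  have hslope : ∀ᶠ δ : ℝ in 𝓝[>] 0,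
      δ⁻¹ • ((f (s - (0 + δ : ℝ)) / f (s + (0 + δ : ℝ))).re -
        (f (s - (0 : ℝ)) / f (s + (0 : ℝ))).re) ≤ 0 := by
    filter_upwards [h, self_mem_nhdsWithin] with δ hδ hpos
    have hle : (f (s - δ) / f (s + δ)).re ≤ 1 :=
      (re_le_norm _).trans (by rw [norm_div]; exact div_le_one_of_le₀ hδ (norm_nonneg _))
    refine mul_nonpos_of_nonneg_of_nonpos (inv_nonneg.2 (le_of_lt hpos)) ?_
    simpa [div_self hne] using hle
  linarith [le_of_tendsto hratio.tendsto_slope_zero_right hslope]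

/-- The entire Riemann `ξ`-function `ξ(s) = s (s - 1) π^(-s/2) Γ(s/2) ζ(s) / 2`, written with
`completedRiemannZeta₀` so that it has no removable singularities. -/
noncomputable def riemannXi (s : ℂ) : ℂ := (s * (s - 1) * completedRiemannZeta₀ s + 1) / 2

/-- The logarithmic derivative of `Γ(s/2 + 1)`, normalized to vanish at `0`: the part of `ξ'/ξ`
contributed by the archimedean factor. -/
noncomputable def archimedeanLogDeriv (s : ℂ) : ℂ :=
  (digamma (1 + s / 2) + Real.eulerMascheroniConstant) / 2

section

variable {s : ℂ} {σ δ : ℝ}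

theorem riemannXi_one_sub (s : ℂ) : riemannXi (1 - s) = riemannXi s := by
  rw [riemannXi, riemannXi, completedRiemannZeta₀_one_sub]
  ring

theorem differentiable_riemannXi : Differentiable ℂ riemannXi :=
  (((differentiable_id.mul (differentiable_id.sub_const 1)).mul
    differentiable_completedZeta₀).add_const 1).div_const 2

theorem riemannXi_eq (hs : 0 < s.re) :
    riemannXi s = riemannZeta₁ s * (Real.pi : ℂ) ^ (-s / 2) * Gamma (s / 2 + 1) := by
  have hs0 : s ≠ 0 := by
    rintro rfl
    simp at hs
  rcases eq_or_ne s 1 with rfl | hs1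
  · rw [riemannZeta₁_one, Gamma_add_one _ (by simp), Gamma_one_half_eq, riemannXi]
    have hpi : (Real.pi : ℂ) ^ (-1 / 2 : ℂ) * (Real.pi : ℂ) ^ (1 / 2 : ℂ) = 1 := by
      rw [← cpow_add _ _ (ofReal_ne_zero.2 Real.pi_ne_zero)]
      norm_num
    linear_combination (-1 / 2 : ℂ) * hpi
  · have hΓ : Gammaℝ s ≠ 0 := Gammaℝ_ne_zero_of_re_pos hs
    have hs1' : 1 - s ≠ 0 := sub_ne_zero.2 hs1.symm
    calc riemannXi s = (s - 1) * completedRiemannZeta s * (s / 2) := by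
          rw [completedRiemannZeta_eq, riemannXi]
          field_simp
          ring
      _ = (s - 1) * (completedRiemannZeta s / Gammaℝ s) * (s / 2) * Gammaℝ s := by field_simp
      _ = _ := by
          rw [riemannZeta₁_eq_mul hs1, riemannZeta_def_of_ne_zero hs0,
            Gamma_add_one _ (by simpa using hs0), Gammaℝ_def]
          ring

theorem riemannZeta₁_ne_zero_of_RH (hRH : RH) (hs : 1 / 2 < s.re) : riemannZeta₁ s ≠ 0 := by
  rcases eq_or_ne s 1 with rfl | hs1
  · simp
  rw [riemannZeta₁_eq_mul hs1]
  refine mul_ne_zero (sub_ne_zero.2 hs1) fun hζ => ?_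
  rcases le_or_gt 1 s.re with h | h
  · exact riemannZeta_ne_zero_of_one_le_re h hζ
  · linarith [hRH s hζ (by linarith) h]

theorem Gamma_half_add_one_ne_zero (hs : 0 < s.re) : Gamma (s / 2 + 1) ≠ 0 :=
  Gamma_ne_zero_of_re_pos (by simp; linarith)

theorem riemannXi_ne_zero_of_RH (hRH : RH) (hs : 1 / 2 < s.re) : riemannXi s ≠ 0 := by
  rw [riemannXi_eq (by linarith)]
  refine mul_ne_zero (mul_ne_zero (riemannZeta₁_ne_zero_of_RH hRH hs) ?_)
    (Gamma_half_add_one_ne_zero (by linarith))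
  simp [Real.pi_ne_zero]

theorem norm_riemannZeta₁_conj (s : ℂ) : ‖riemannZeta₁ (conj s)‖ = ‖riemannZeta₁ s‖ := by
  rcases eq_or_ne s 1 with rfl | hs
  · simp
  have hs' : conj s ≠ 1 := fun h => hs (by simpa using congrArg conj h)
  rw [riemannZeta₁_eq_mul hs, riemannZeta₁_eq_mul hs', riemannZeta_conj,
    ← norm_conj ((s - 1) * riemannZeta s)]
  simp

theorem norm_riemannXi_conj (hs : 0 < s.re) : ‖riemannXi (conj s)‖ = ‖riemannXi s‖ := by
  have hΓ : ‖Gamma (conj s / 2 + 1)‖ = ‖Gamma (s / 2 + 1)‖ := by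
    rw [← norm_conj (Gamma (s / 2 + 1)), ← Gamma_conj, map_add, map_div₀, map_one, conj_ofNat]
  simp only [riemannXi_eq hs, riemannXi_eq (s := conj s) (by simpa using hs), norm_mul,
    norm_riemannZeta₁_conj, norm_cpow_eq_rpow_re_of_pos Real.pi_pos, hΓ]
  simp

theorem norm_riemannXi_line_sub_eq (hδ : 0 < δ) (t : ℝ) :
    ‖riemannXi ((1 / 2 : ℝ) + t * I - δ)‖ = ‖riemannXi ((1 / 2 : ℝ) + t * I + δ)‖ := by
  have hreflect : ((1 / 2 : ℝ) + t * I - δ : ℂ) = 1 - conj ((1 / 2 : ℝ) + t * I + δ) := by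
    apply Complex.ext <;> simp
    ring
  rw [hreflect, riemannXi_one_sub, norm_riemannXi_conj (by simp; linarith)]

theorem riemannXi_sub_div_riemannXi_add (hs : δ < s.re) (hδ : 0 < δ) :
    riemannXi (s - δ) / riemannXi (s + δ) =
      riemannZeta₁ (s - δ) * (riemannZeta₁ (s + δ))⁻¹ *
        ((Real.pi : ℂ) ^ (δ : ℂ) *
          (Gamma ((s - δ) / 2 + 1) / Gamma ((s - δ) / 2 + 1 + δ))) := by
  have hpi : (Real.pi : ℂ) ≠ 0 := ofReal_ne_zero.2 Real.pi_ne_zero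
  rw [riemannXi_eq (by simpa using hs), riemannXi_eq (by simp; linarith),
    show (s - δ) / 2 + 1 + δ = (s + δ) / 2 + 1 by ring,
    show -(s - δ) / 2 = -(s + δ) / 2 + δ by ring, cpow_add _ _ hpi]
  have : (Real.pi : ℂ) ^ (-(s + δ) / 2) ≠ 0 := by simp [Real.pi_ne_zero]
  field_simp

theorem holomorphicWithGrowth_Gamma_div_Gamma (hδ : 0 < δ) (hδ' : δ < 1 / 2) :
    HolomorphicWithGrowth (fun s => Gamma ((s - δ) / 2 + 1) / Gamma ((s - δ) / 2 + 1 + δ))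
      (Set.Ici (1 / 2)) 0 := by
  obtain ⟨C, hC⟩ := exists_norm_Gamma_div_Gamma_add_le one_pos hδ
  refine .of_norm_le (C := C) (fun {s} hs => ?_) fun {s} hs => ?_
  all_goals
    have hs' : (1 : ℝ) / 2 ≤ s.re := hs
    have hre : 1 ≤ ((s - δ) / 2 + 1).re := by simp; linarith
  · have hre' : 0 < ((s - δ) / 2 + 1 + δ).re := by
      rw [add_re, ofReal_re]
      linarith
    have hnum := differentiableAt_Gamma_of_re_pos (one_pos.trans_le hre)
    have hden := differentiableAt_Gamma_of_re_pos hre'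
    exact (hnum.comp s (by fun_prop)).div (hden.comp s (by fun_prop)) (Gamma_ne_zero_of_re_pos hre')
  · simpa using hC _ hre

theorem exists_holomorphicWithGrowth_riemannZeta₁_inv (hRH : RH) (hσ : 1 / 2 < σ) :
    ∃ α, HolomorphicWithGrowth (fun s => (riemannZeta₁ s)⁻¹) (Set.Ici σ) α :=
  ((holomorphicWithGrowth_riemannZeta₁ one_half_pos).mono_set Set.Ioi_subset_Ici_self).exists_inv
    two_pos.le (fun _ => riemannZeta₁_ne_zero_of_RH hRH) (by norm_num)
    (fun _ => one_quarter_le_norm_riemannZeta₁) hσ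

theorem exists_holomorphicWithGrowth_riemannXi_div (hRH : RH) (hδ : 0 < δ) (hδ' : δ < 1 / 2) :
    ∃ α, HolomorphicWithGrowth (fun s => riemannXi (s - δ) / riemannXi (s + δ))
      (Set.Ici (1 / 2)) α := by
  obtain ⟨α, hinv⟩ := exists_holomorphicWithGrowth_riemannZeta₁_inv hRH
    (σ := 1 / 2 + δ) (by linarith)
  have hnum := (holomorphicWithGrowth_riemannZeta₁ (θ := 1 / 2 - δ) (by linarith)).comp_mul_add
    (J' := Set.Ici (1 / 2)) two_pos.le 1 (-δ) fun x hx => by simpa [← sub_eq_add_neg] using hx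
  have hden := (hinv.mono_exponent (le_max_left α 0)).comp_mul_add
    (J' := Set.Ici (1 / 2)) (le_max_right α 0) 1 δ fun x hx => by simpa using hx
  refine ⟨_, ((hnum.mul hden).mul ((holomorphicWithGrowth_Gamma_div_Gamma hδ hδ').const_mul
    ((Real.pi : ℂ) ^ (δ : ℂ)))).congr fun {s} hs => ?_⟩
  filter_upwards [(isOpen_lt continuous_const continuous_re).mem_nhds
    (hδ'.trans_le hs : δ < s.re)] with z hz
  simpa [← sub_eq_add_neg] using riemannXi_sub_div_riemannXi_add hz hδ

theorem norm_riemannXi_sub_le_norm_riemannXi_add (hRH : RH) (hδ : 0 < δ) (hδ' : δ < 1 / 2)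
    (hs : 1 / 2 ≤ s.re) : ‖riemannXi (s - δ)‖ ≤ ‖riemannXi (s + δ)‖ := by
  obtain ⟨α, hratio⟩ := exists_holomorphicWithGrowth_riemannXi_div hRH hδ hδ'
  have hline (t : ℝ) : ‖riemannXi ((1 / 2 : ℝ) + t * I - δ) /
      riemannXi ((1 / 2 : ℝ) + t * I + δ)‖ ≤ 1 := by
    rw [norm_div, norm_riemannXi_line_sub_eq hδ]
    exact div_self_le_one _
  have hle := hratio.norm_le_of_norm_line_le hline hs
  have hne : riemannXi (s + δ) ≠ 0 := riemannXi_ne_zero_of_RH hRH (by simp; linarith)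
  rwa [norm_div, div_le_one (norm_pos_iff.2 hne)] at hle

theorem re_logDeriv_riemannXi_nonneg (hRH : RH) (hs : 1 / 2 < s.re) :
    0 ≤ (logDeriv riemannXi s).re := by
  refine re_logDeriv_nonneg_of_norm_sub_le_norm_add (differentiable_riemannXi s)
    (riemannXi_ne_zero_of_RH hRH hs) ?_
  filter_upwards [Ioo_mem_nhdsGT one_half_pos] with δ hδ
    using norm_riemannXi_sub_le_norm_riemannXi_add hRH hδ.1 hδ.2 hs.le

theorem re_archimedeanLogDeriv_nonneg (hs : 0 ≤ s.re) : 0 ≤ (archimedeanLogDeriv s).re := by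
  rw [archimedeanLogDeriv, div_ofNat_re]
  have := re_digamma_one_add_nonneg (w := s / 2) (by simpa using by linarith)
  positivity

theorem holomorphicWithGrowth_archimedeanLogDeriv :
    HolomorphicWithGrowth archimedeanLogDeriv (Set.Ici 0) (1 / 2) := by
  have := (holomorphicWithGrowth_digamma_one_add.comp_mul_add (J' := Set.Ici 0) one_half_pos.le
    (1 / 2) 0 (by simp)).const_mul (1 / 2)
  convert this using 2 with s
  push_cast
  rw [archimedeanLogDeriv]
  ring_nf

theorem logDeriv_Gamma_half_add_one (hs : 0 < s.re) :
    logDeriv (fun z : ℂ => Gamma (z / 2 + 1)) s = digamma (1 + s / 2) / 2 := by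
  have hinner : HasDerivAt (fun z : ℂ => z / 2 + 1) (1 / 2) s :=
    ((hasDerivAt_id s).div_const 2).add_const 1
  have hcomp := logDeriv_comp (f := Gamma) (x := s)
    (differentiableAt_Gamma_of_re_pos (by simp; linarith)) hinner.differentiableAt
  rw [hinner.deriv, ← digamma_def, add_comm (s / 2), mul_one_div] at hcomp
  exact hcomp

theorem logDeriv_riemannXi (hs : 0 < s.re) (hζ : riemannZeta₁ s ≠ 0) :
    logDeriv riemannXi s = logDeriv riemannZeta₁ s + archimedeanLogDeriv s -
      ((Real.eulerMascheroniConstant + Real.log Real.pi) / 2 : ℝ) := by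
  have hπ : HasDerivAt (fun z : ℂ => (Real.pi : ℂ) ^ (-z / 2))
      ((Real.pi : ℂ) ^ (-s / 2) * log Real.pi * (-1 / 2)) s :=
    ((hasDerivAt_id s).neg.div_const 2).const_cpow (.inl (ofReal_ne_zero.2 Real.pi_ne_zero))
  have hπ_ne : (Real.pi : ℂ) ^ (-s / 2) ≠ 0 := by simp [Real.pi_ne_zero]
  have hΓ : DifferentiableAt ℂ (fun z : ℂ => Gamma (z / 2 + 1)) s :=
    (differentiableAt_Gamma_of_re_pos (by simp; linarith)).comp s (by fun_prop)
  have hprod : riemannXi =ᶠ[𝓝 s] fun z =>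
      riemannZeta₁ z * (Real.pi : ℂ) ^ (-z / 2) * Gamma (z / 2 + 1) :=
    mem_of_superset ((isOpen_lt continuous_const continuous_re).mem_nhds hs) fun _ => riemannXi_eq
  rw [(logDeriv_congr_nhds hprod).eq_of_nhds,
    logDeriv_mul (f := fun z => riemannZeta₁ z * (Real.pi : ℂ) ^ (-z / 2)) s
      (mul_ne_zero hζ hπ_ne) (Gamma_half_add_one_ne_zero hs)
      ((differentiable_riemannZeta₁ s).mul hπ.differentiableAt) hΓ,
    logDeriv_mul s hζ hπ_ne (differentiable_riemannZeta₁ s) hπ.differentiableAt,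
    logDeriv_Gamma_half_add_one hs, logDeriv_apply (fun z : ℂ => (Real.pi : ℂ) ^ (-z / 2)),
    hπ.deriv, archimedeanLogDeriv]
  push_cast
  rw [ofReal_log Real.pi_pos.le]
  field_simp
  ring

theorem holomorphicWithGrowth_logDeriv_riemannZeta₁ (hRH : RH) (hσ : 1 / 2 < σ) :
    HolomorphicWithGrowth (logDeriv riemannZeta₁) (Set.Ici σ) (1 / 2) :=
  ((holomorphicWithGrowth_riemannZeta₁ one_half_pos).mono_set Set.Ioi_subset_Ici_self).logDeriv
    two_pos.le (fun _ => riemannZeta₁_ne_zero_of_RH hRH) (by norm_num)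
    (fun _ => one_quarter_le_norm_riemannZeta₁) hσ one_half_pos

theorem holomorphicWithGrowth_logDeriv_riemannXi (hRH : RH) (hσ : 1 / 2 < σ) :
    HolomorphicWithGrowth (logDeriv riemannXi) (Set.Ici σ) (1 / 2) := by
  refine (((holomorphicWithGrowth_logDeriv_riemannZeta₁ hRH hσ).add
    (holomorphicWithGrowth_archimedeanLogDeriv.mono_set
      (Set.Ici_subset_Ici.2 (by linarith)))).sub
    ((HolomorphicWithGrowth.const
      (((Real.eulerMascheroniConstant + Real.log Real.pi) / 2 : ℝ) : ℂ)).mono_exponent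
      one_half_pos.le)).congr fun {s} hs => ?_
  filter_upwards [(isOpen_lt continuous_const continuous_re).mem_nhds
    (hσ.trans_le hs : 1 / 2 < s.re)] with z hz
  exact logDeriv_riemannXi (by linarith [Set.mem_ofPred.1 hz]) (riemannZeta₁_ne_zero_of_RH hRH hz)

theorem archimedeanLogDeriv_one : archimedeanLogDeriv 1 = (1 - Real.log 2 : ℝ) := by
  have hrec := digamma_apply_add_one (1 / 2) fun m h => by
    have := congrArg re h
    norm_num at this
    linarith [m.cast_nonneg (α := ℝ)]
  rw [archimedeanLogDeriv, add_comm 1, hrec, digamma_one_half]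
  push_cast [ofReal_log zero_le_two]
  ring

theorem archimedeanLogDeriv_two : archimedeanLogDeriv 2 = 1 / 2 := by
  have hrec := digamma_apply_add_one 1 fun m h => by
    have := congrArg re h
    norm_num at this
    linarith [m.cast_nonneg (α := ℝ)]
  rw [archimedeanLogDeriv, div_self two_ne_zero, hrec, digamma_one]
  ring

theorem logDeriv_riemannZeta₁_one : logDeriv riemannZeta₁ 1 = Real.eulerMascheroniConstant := by
  rw [logDeriv_apply, riemannZeta₁_one, deriv_riemannZeta₁_one, div_one]

end

section PerronFormula

variable {a : ℕ → ℂ} {σ x : ℝ}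

theorem integral_perronKernel_of_one_le (hσ : 0 < σ) (hx : 1 ≤ x) :
    ∫ t : ℝ, perronKernel x (σ + t * I) = (2 * Real.pi * (x - 1) : ℝ) := by
  have h := integral_mul_conj_perronKernel (HolomorphicWithGrowth.const 1) one_pos hσ hx
  simp only [one_mul, mul_one, integral_conj] at h
  rw [← conj_conj (∫ t : ℝ, perronKernel x (σ + t * I)), h]
  simp [conj_ofNat]

theorem integral_perronKernel_of_le_one (hσ : 0 < σ) (hx : 0 < x) (hx1 : x ≤ 1) :
    ∫ t : ℝ, perronKernel x (σ + t * I) = 0 := by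
  have h0 := HolomorphicWithGrowth.inv_add_const_Ici (σ := σ) (c := 0) (by simpa)
  have h1 := HolomorphicWithGrowth.inv_add_const_Ici (σ := σ) (c := 1) (by simp; linarith)
  have hprod := (HolomorphicWithGrowth.cpow_const_sub ((one_le_inv₀ hx).2 hx1) (-1)).mul
    (h0.mul h1)
  convert hprod.integral_line_eq_zero (by norm_num) using 3 with t
  have harg : (x : ℂ).arg ≠ Real.pi := by
    rw [arg_ofReal_of_nonneg hx.le]
    exact Real.pi_ne_zero.symm
  rw [perronKernel, ofReal_inv, inv_cpow _ _ harg, ← cpow_neg, neg_sub, sub_neg_eq_add, add_zero,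
    ← mul_inv, div_eq_mul_inv]

theorem integral_perronKernel (hσ : 0 < σ) (hx : 0 < x) :
    ∫ t : ℝ, perronKernel x (σ + t * I) = (2 * Real.pi * max (x - 1) 0 : ℝ) := by
  rcases le_total 1 x with h | h
  · rw [integral_perronKernel_of_one_le hσ h, max_eq_left (by linarith)]
  · rw [integral_perronKernel_of_le_one hσ hx h, max_eq_right (by linarith), mul_zero, ofReal_zero]

theorem integrable_perronKernel (hσ : 0 < σ) (hx : 0 < x) :
    Integrable fun t : ℝ => perronKernel x (σ + t * I) := by
  simpa using integrable_mul_perronKernel (HolomorphicWithGrowth.const 1) one_pos hσ hx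

theorem integral_inv_sub_one_mul_perronKernel (hσ : 1 < σ) (hx : 1 ≤ x) :
    ∫ t : ℝ, (σ + t * I - 1 : ℂ)⁻¹ * perronKernel x (σ + t * I) =
      (2 * Real.pi * ((x - 1) ^ 2 / 2) : ℝ) := by
  have hx0 : 0 < x := by linarith
  have hne (c : ℝ) (hc : 0 < σ + c) (t : ℝ) : (σ + t * I + c : ℂ) ≠ 0 := fun h => by
    simpa [hc.ne'] using congrArg re h
  have hpartial (t : ℝ) : (σ + t * I - 1 : ℂ)⁻¹ * perronKernel x (σ + t * I) =
      (x * perronKernel x ((σ - 1 : ℝ) + t * I) - perronKernel x (σ + t * I)) / 2 := by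
    have h0 := hne 0 (by linarith) t
    have h1 := hne 1 (by linarith) t
    have h2 := hne (-1) (by linarith) t
    rw [perronKernel, perronKernel, cpow_add _ _ (ofReal_ne_zero.2 hx0.ne')]
    push_cast [add_zero, ← sub_eq_add_neg] at h0 h1 h2 ⊢
    rw [show (σ - 1 + t * I + 1 : ℂ) = σ + t * I by ring,
      show (σ - 1 + t * I : ℂ) = σ + t * I - 1 by ring, cpow_one]
    field_simp
    ring
  simp_rw [hpartial]
  rw [integral_div, integral_sub ((integrable_perronKernel (by linarith) hx0).const_mul _)
    (integrable_perronKernel (by linarith) hx0), integral_const_mul,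
    integral_perronKernel_of_one_le (by linarith) hx,
    integral_perronKernel_of_one_le (by linarith) hx]
  push_cast
  ring

theorem inv_natCast_cpow_mul_perronKernel {n : ℕ} (hn : n ≠ 0) (hx : 0 < x) (s : ℂ) :
    ((n : ℂ) ^ s)⁻¹ * perronKernel x s = n * perronKernel (x / n) s := by
  have hnc : (n : ℂ) ≠ 0 := by exact_mod_cast hn
  rw [perronKernel, perronKernel, ofReal_div, div_cpow_ofReal_nonneg hx.le n.cast_nonneg,
    ofReal_natCast, cpow_add _ _ hnc, cpow_one]
  field_simp

theorem integral_term_mul_perronKernel (hσ : 0 < σ) (hx : 0 < x) (n : ℕ) :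
    ∫ t : ℝ, LSeries.term a (σ + t * I) n * perronKernel x (σ + t * I) =
      if n = 0 then 0 else 2 * Real.pi * ((max (x - n) 0 : ℝ) * a n) := by
  split_ifs with hn
  · simp [hn]
  have hn0 : (0 : ℝ) < n := by positivity
  have hterm (t : ℝ) : LSeries.term a (σ + t * I) n * perronKernel x (σ + t * I) =
      a n * n * perronKernel (x / n) (σ + t * I) := by
    rw [LSeries.term_of_ne_zero hn, div_eq_mul_inv, mul_assoc,
      inv_natCast_cpow_mul_perronKernel hn hx, mul_assoc]
  have hmax : max (x - n) 0 = n * max (x / n - 1) 0 := by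
    rw [mul_max_of_nonneg _ _ hn0.le, mul_zero, mul_sub, mul_div_cancel₀ _ hn0.ne', mul_one]
  simp_rw [hterm]
  rw [integral_const_mul, integral_perronKernel hσ (by positivity), hmax]
  push_cast
  ring

theorem hasSum_integral_LSeries_mul_perronKernel (ha : LSeriesSummable a σ) (hσ : 0 < σ)
    (hx : 0 < x) :
    HasSum (fun n => ∫ t : ℝ, LSeries.term a (σ + t * I) n * perronKernel x (σ + t * I))
      (∫ t : ℝ, LSeries a (σ + t * I) * perronKernel x (σ + t * I)) := by
  have hw := integrable_perronKernel hσ hx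
  have hnorm (n : ℕ) (t : ℝ) : ‖LSeries.term a (σ + t * I) n * perronKernel x (σ + t * I)‖ =
      ‖LSeries.term a σ n‖ * ‖perronKernel x (σ + t * I)‖ := by
    simp [LSeries.norm_term_eq]
  have hcont (n : ℕ) : Continuous fun t : ℝ => LSeries.term a (σ + t * I) n := by
    rcases eq_or_ne n 0 with rfl | hn
    · simpa using continuous_const
    · have hnc : (n : ℂ) ≠ 0 := by exact_mod_cast hn
      simp only [LSeries.term_of_ne_zero hn]
      exact continuous_const.div (.const_cpow (by fun_prop) (.inl hnc)) fun t => by simp [hnc]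
  have hint (n : ℕ) : Integrable fun t : ℝ =>
      LSeries.term a (σ + t * I) n * perronKernel x (σ + t * I) :=
    (hw.norm.const_mul ‖LSeries.term a σ n‖).mono'
      ((hcont n).aestronglyMeasurable.mul hw.aestronglyMeasurable)
      (ae_of_all _ fun t => (hnorm n t).le)
  have hsum := hasSum_integral_of_summable_integral_norm hint <| by
    simp_rw [hnorm, integral_const_mul]
    exact ha.norm.mul_right _
  simpa only [LSeries, tsum_mul_right] using hsum

theorem integral_LSeries_mul_perronKernel (ha : LSeriesSummable a σ) (hσ : 0 < σ) (hx : 0 < x) :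
    ∫ t : ℝ, LSeries a (σ + t * I) * perronKernel x (σ + t * I) =
      2 * Real.pi * ∑ n ∈ Finset.Icc 1 ⌊x⌋₊, (x - n) * a n := by
  have hsum := hasSum_integral_LSeries_mul_perronKernel ha hσ hx
  simp_rw [integral_term_mul_perronKernel hσ hx] at hsum
  rw [hsum.unique (hasSum_sum_of_ne_finset_zero (s := Finset.Icc 1 ⌊x⌋₊) fun n hn => ?_),
    Finset.mul_sum]
  · refine Finset.sum_congr rfl fun n hn => ?_
    have hle := (Nat.le_floor_iff hx.le).1 (Finset.mem_Icc.1 hn).2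
    rw [if_neg (by grind), max_eq_left (by linarith)]
    push_cast
    rfl
  · split_ifs with h0
    · rfl
    · have hlt : x < n := by
        by_contra! hle
        exact hn (Finset.mem_Icc.2 ⟨Nat.one_le_iff_ne_zero.2 h0, (Nat.le_floor_iff hx.le).2 hle⟩)
      rw [max_eq_right (by linarith), ofReal_zero, zero_mul, mul_zero]

end PerronFormula

section ExplicitFormula

variable {s : ℂ} {σ x : ℝ}

theorem chebyshevPsi1_eq_sum (hx : 1 ≤ x) :
    chebyshevPsi1 x = ∑ n ∈ Finset.Icc 1 ⌊x⌋₊, (x - n) * ArithmeticFunction.vonMangoldt n := by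
  have hd : deriv (fun t : ℝ => x - t) = fun _ => -1 := by
    ext t
    exact ((hasDerivAt_id t).const_sub x).deriv
  have hIcc (n : ℕ) : Finset.Icc 0 n = Finset.cons 0 (Finset.Icc 1 n) (by simp) := by
    rw [Finset.Icc_eq_cons_Ioc n.zero_le]
    rfl
  have habel := sum_mul_eq_sub_integral_mul₀ ArithmeticFunction.vonMangoldt
    (f := fun t : ℝ => x - t) (by simp) x (fun t _ => by fun_prop)
    (by rw [hd]; exact integrableOn_const (by simp))
  simp only [hIcc, Finset.sum_cons, ArithmeticFunction.map_zero, mul_zero, zero_add, sub_self,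
    zero_mul, zero_sub, hd, neg_mul, one_mul, integral_neg, neg_neg] at habel
  rw [habel, chebyshevPsi1, intervalIntegral.integral_of_le hx]
  rfl

theorem LSeries_vonMangoldt_eq (hs : 1 < s.re) :
    LSeries (fun n => (ArithmeticFunction.vonMangoldt n : ℂ)) s =
      (s - 1)⁻¹ - logDeriv riemannZeta₁ s := by
  have hs1 : s ≠ 1 := by
    rintro rfl
    simp at hs
  have hζ₁ : riemannZeta₁ =ᶠ[𝓝 s] fun z => (z - 1) * riemannZeta z :=
    mem_of_superset (isOpen_ne.mem_nhds hs1) fun _ => riemannZeta₁_eq_mul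
  have hsub : HasDerivAt (fun z : ℂ => z - 1) 1 s := (hasDerivAt_id s).sub_const 1
  rw [ArithmeticFunction.LSeries_vonMangoldt_eq_deriv_riemannZeta_div hs,
    (logDeriv_congr_nhds hζ₁).eq_of_nhds,
    logDeriv_mul (f := fun z : ℂ => z - 1) s (sub_ne_zero.2 hs1)
      (riemannZeta_ne_zero_of_one_lt_re hs) hsub.differentiableAt
      (differentiableAt_riemannZeta hs1), logDeriv_apply, hsub.deriv, logDeriv_apply]
  ring

theorem re_logDeriv_riemannZeta₁_two_le : (logDeriv riemannZeta₁ 2).re ≤ 1 := by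
  have hsum := ArithmeticFunction.LSeriesSummable_vonMangoldt (s := 2) (by norm_num)
  have hnonneg : 0 ≤ (LSeries (fun n => (ArithmeticFunction.vonMangoldt n : ℂ)) 2).re := by
    rw [LSeries, re_tsum hsum]
    refine tsum_nonneg fun n => ?_
    rcases eq_or_ne n 0 with rfl | hn
    · simp
    · rw [LSeries.term_of_ne_zero hn, cpow_ofNat, ← ofReal_natCast, ← ofReal_pow, ← ofReal_div,
        ofReal_re]
      have := ArithmeticFunction.vonMangoldt_nonneg (n := n)
      positivity
  rw [LSeries_vonMangoldt_eq (by norm_num)] at hnonneg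
  norm_num at hnonneg
  exact hnonneg

theorem integral_logDeriv_riemannZeta₁_mul_perronKernel_two (hRH : RH) (hx : 1 ≤ x) :
    ∫ t : ℝ, logDeriv riemannZeta₁ ((2 : ℝ) + t * I) * perronKernel x ((2 : ℝ) + t * I) =
      (2 * Real.pi * ((x - 1) ^ 2 / 2 - chebyshevPsi1 x) : ℝ) := by
  have hx0 : 0 < x := by linarith
  have hmem : {(2 : ℝ)} ⊆ Set.Ici (2 : ℝ) := by simp
  have hlog := integrable_mul_perronKernel
    ((holomorphicWithGrowth_logDeriv_riemannZeta₁ hRH (by norm_num)).mono_set hmem)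
    one_half_lt_one two_pos hx0
  have hpole := integrable_mul_perronKernel ((HolomorphicWithGrowth.inv_add_const_Ici (σ := 2)
    (c := -1) (by norm_num)).mono_set hmem) (by norm_num) two_pos hx0
  have hperron := integral_LSeries_mul_perronKernel (σ := 2)
    (ArithmeticFunction.LSeriesSummable_vonMangoldt (by norm_num)) two_pos hx0
  have hsplit (t : ℝ) : LSeries (fun n => (ArithmeticFunction.vonMangoldt n : ℂ))
      ((2 : ℝ) + t * I) * perronKernel x ((2 : ℝ) + t * I) =
      ((2 : ℝ) + t * I - 1 : ℂ)⁻¹ * perronKernel x ((2 : ℝ) + t * I) -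
        logDeriv riemannZeta₁ ((2 : ℝ) + t * I) * perronKernel x ((2 : ℝ) + t * I) := by
    rw [LSeries_vonMangoldt_eq (by simp), sub_mul]
  simp_rw [← sub_eq_add_neg] at hpole
  simp_rw [hsplit] at hperron
  rw [integral_sub hpole hlog, integral_inv_sub_one_mul_perronKernel one_lt_two hx] at hperron
  rw [chebyshevPsi1_eq_sum hx]
  push_cast at hperron ⊢
  linear_combination -hperron

theorem integral_logDeriv_riemannZeta₁_mul_perronKernel (hRH : RH) (hσ : 1 / 2 < σ) (hσ2 : σ ≤ 2)
    (hx : 1 ≤ x) :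
    ∫ t : ℝ, logDeriv riemannZeta₁ (σ + t * I) * perronKernel x (σ + t * I) =
      (2 * Real.pi * ((x - 1) ^ 2 / 2 - chebyshevPsi1 x) : ℝ) := by
  rw [← integral_logDeriv_riemannZeta₁_mul_perronKernel_two hRH hx]
  exact (((holomorphicWithGrowth_logDeriv_riemannZeta₁ hRH hσ).mono_set
    Set.Icc_subset_Ici_self).mul (holomorphicWithGrowth_perronKernel (by linarith)
      (by linarith))).integral_line_eq (by norm_num) hσ2

theorem chebyshevPsi1_eq_re_integral (hRH : RH) (hσ : 1 / 2 < σ) (hσ2 : σ ≤ 2) (hx : 1 ≤ x) :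
    2 * Real.pi * ((x - 1) ^ 2 / 2 - chebyshevPsi1 x) =
      (∫ t : ℝ, logDeriv riemannXi (σ + t * I) * perronKernel x (σ + t * I)).re -
        (∫ t : ℝ, archimedeanLogDeriv (σ + t * I) * perronKernel x (σ + t * I)).re +
        2 * Real.pi * ((Real.eulerMascheroniConstant + Real.log Real.pi) / 2 * (x - 1)) := by
  have hσ0 : 0 < σ := by linarith
  have hx0 : 0 < x := by linarith
  have hξ := integrable_mul_perronKernel ((holomorphicWithGrowth_logDeriv_riemannXi hRH
    hσ).mono_set (Set.singleton_subset_iff.2 Set.self_mem_Ici)) one_half_lt_one hσ0 hx0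
  have harch := integrable_mul_perronKernel (holomorphicWithGrowth_archimedeanLogDeriv.mono_set
    (Set.singleton_subset_iff.2 hσ0.le)) one_half_lt_one hσ0 hx0
  have hsplit (t : ℝ) : logDeriv riemannZeta₁ (σ + t * I) * perronKernel x (σ + t * I) =
      logDeriv riemannXi (σ + t * I) * perronKernel x (σ + t * I) -
        archimedeanLogDeriv (σ + t * I) * perronKernel x (σ + t * I) +
        ((Real.eulerMascheroniConstant + Real.log Real.pi) / 2 : ℝ) *
          perronKernel x (σ + t * I) := by
    rw [logDeriv_riemannXi (by simpa) (riemannZeta₁_ne_zero_of_RH hRH (by simpa using hσ))]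
    ring
  have hint := integral_logDeriv_riemannZeta₁_mul_perronKernel hRH hσ hσ2 hx
  simp_rw [hsplit] at hint
  rw [integral_add (by exact hξ.sub harch) ((integrable_perronKernel hσ0 hx0).const_mul _),
    integral_sub hξ harch, integral_const_mul, integral_perronKernel_of_one_le hσ0 hx] at hint
  have hre := congrArg re hint
  rw [add_re, sub_re, re_ofReal_mul, ofReal_re, ofReal_re] at hre
  linarith

theorem abs_chebyshevPsi1_sub_le_of_half_lt (hRH : RH) (hσ : 1 / 2 < σ) (hσ2 : σ ≤ 2)
    (hx : 1 ≤ x) :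
    |(x - 1) ^ 2 / 2 - chebyshevPsi1 x -
        (Real.eulerMascheroniConstant + Real.log Real.pi) / 2 * (x - 1) +
        x * (logDeriv riemannXi (2 * σ) - archimedeanLogDeriv (2 * σ)).re -
        (logDeriv riemannXi (2 * σ + 1) - archimedeanLogDeriv (2 * σ + 1)).re| ≤
      x ^ (σ + 1) / σ * (logDeriv riemannXi (2 * σ) + archimedeanLogDeriv (2 * σ)).re := by
  have hσ0 : 0 < σ := by linarith
  have hξ := abs_re_integral_mul_perronKernel_add_le
    (holomorphicWithGrowth_logDeriv_riemannXi hRH hσ) one_half_lt_one hσ0 hx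
    fun t => re_logDeriv_riemannXi_nonneg hRH (by simpa using hσ)
  have harch := abs_re_integral_mul_perronKernel_add_le
    (holomorphicWithGrowth_archimedeanLogDeriv.mono_set (Set.Ici_subset_Ici.2 hσ0.le))
    one_half_lt_one hσ0 hx fun t => re_archimedeanLogDeriv_nonneg (by simpa using hσ0.le)
  have hpsi := chebyshevPsi1_eq_re_integral hRH hσ hσ2 hx
  have hpi : 0 < 2 * Real.pi := Real.two_pi_pos
  rw [← mul_le_mul_iff_right₀ hpi, ← abs_of_pos hpi, ← abs_mul, abs_of_pos hpi]
  simp only [sub_re, add_re, re_ofReal_mul] at *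
  refine le_trans (le_of_eq ?_) ((abs_sub _ _).trans (add_le_add hξ harch)) |>.trans_eq ?_
  · congr 1
    linear_combination hpsi
  · ring

theorem abs_chebyshevPsi1_sub_le_of_half (hRH : RH) (hx : 1 ≤ x) :
    |(x - 1) ^ 2 / 2 - chebyshevPsi1 x -
        (Real.eulerMascheroniConstant + Real.log Real.pi) / 2 * (x - 1) +
        x * (logDeriv riemannXi 1 - archimedeanLogDeriv 1).re -
        (logDeriv riemannXi 2 - archimedeanLogDeriv 2).re| ≤
      2 * x ^ ((3 : ℝ) / 2) * (logDeriv riemannXi 1 + archimedeanLogDeriv 1).re := by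
  have hcont {K : ℂ → ℂ} {c a : ℂ} (hK : DifferentiableAt ℂ K a) (ha : 1 + c = a) :
      Tendsto (fun σ : ℝ => K (2 * σ + c)) (𝓝[>] (1 / 2)) (𝓝 (K a)) := by
    have hlin : Continuous fun σ : ℝ => (2 * σ + c : ℂ) := by fun_prop
    refine (hK.continuousAt.tendsto.comp ?_).mono_left nhdsWithin_le_nhds
    simpa [ha] using hlin.tendsto (1 / 2)
  have hξ {s : ℂ} (hs : 1 ≤ s.re) : DifferentiableAt ℂ (logDeriv riemannXi) s :=
    (holomorphicWithGrowth_logDeriv_riemannXi hRH one_half_lt_one).differentiableAt hs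
  have harch {s : ℂ} (hs : 0 ≤ s.re) : DifferentiableAt ℂ archimedeanLogDeriv s :=
    holomorphicWithGrowth_archimedeanLogDeriv.differentiableAt hs
  have hξ₁ := hcont (c := 0) (hξ one_re.ge) (add_zero 1)
  have hξ₂ := hcont (c := 1) (a := 2) (hξ (by norm_num)) one_add_one_eq_two
  have harch₁ := hcont (c := 0) (harch (one_re ▸ zero_le_one)) (add_zero 1)
  have harch₂ := hcont (c := 1) (a := 2) (harch (by norm_num)) one_add_one_eq_two
  simp only [add_zero] at hξ₁ harch₁
  have hre {f : ℝ → ℂ} {l : ℂ} (hf : Tendsto f (𝓝[>] (1 / 2)) (𝓝 l)) :=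
    (continuous_re.tendsto l).comp hf
  have hσ : Tendsto (fun σ : ℝ => σ) (𝓝[>] (1 / 2)) (𝓝 (1 / 2)) := nhdsWithin_le_nhds
  have hpow : Tendsto (fun σ : ℝ => x ^ (σ + 1) / σ) (𝓝[>] (1 / 2))
      (𝓝 (x ^ ((1 / 2 : ℝ) + 1) / (1 / 2))) :=
    ((Real.continuous_const_rpow (by linarith)).tendsto _ |>.comp (hσ.add_const 1)).div hσ
      (by norm_num)
  refine (le_of_tendsto_of_tendsto
    (((hre (hξ₁.sub harch₁)).const_mul x |>.const_add _).sub (hre (hξ₂.sub harch₂))).abs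
    (hpow.mul (hre (hξ₁.add harch₁))) ?_).trans_eq ?_
  · filter_upwards [Ioo_mem_nhdsGT one_half_lt_one] with σ hσ
    exact abs_chebyshevPsi1_sub_le_of_half_lt hRH hσ.1 (by linarith [hσ.2]) hx
  · rw [show (1 / 2 + 1 : ℝ) = 3 / 2 by norm_num]
    ring

theorem abs_half_sq_sub_chebyshevPsi1_sub_le (hRH : RH) (hx : 1 ≤ x) :
    |x ^ 2 / 2 - chebyshevPsi1 x - ((1 + Real.log Real.pi) * x -
        (1 / 2 + Real.eulerMascheroniConstant + Real.log Real.pi -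
          (logDeriv riemannZeta₁ 2).re))| ≤
      (4 + Real.eulerMascheroniConstant - 4 * Real.log 2 - Real.log Real.pi) *
        x ^ ((3 : ℝ) / 2) := by
  have hne {s : ℂ} (hs : 1 / 2 < s.re) : riemannZeta₁ s ≠ 0 := riemannZeta₁_ne_zero_of_RH hRH hs
  have h := abs_chebyshevPsi1_sub_le_of_half hRH hx
  rw [logDeriv_riemannXi (s := 1) (by simp) (hne (by norm_num)),
    logDeriv_riemannXi (s := 2) (by simp) (hne (by norm_num)),
    logDeriv_riemannZeta₁_one, archimedeanLogDeriv_one] at h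
  simp only [sub_re, add_re, ofReal_re] at h
  convert h using 1
  · congr 1
    ring
  · ring

theorem re_logDeriv_riemannZeta₁_two_ge (hRH : RH) :
    (Real.eulerMascheroniConstant + Real.log Real.pi - 1) / 2 ≤ (logDeriv riemannZeta₁ 2).re := by
  have h := re_logDeriv_riemannXi_nonneg hRH (s := 2) (by norm_num)
  rw [logDeriv_riemannXi (by simp) (riemannZeta₁_ne_zero_of_RH hRH (by norm_num)),
    archimedeanLogDeriv_two, sub_re, add_re, ofReal_re] at h
  norm_num at h
  linarith

theorem abs_chebyshevPsi1_sub_half_sq_le (hRH : RH) (hx : 1 ≤ x) :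
    |chebyshevPsi1 x - x ^ 2 / 2| ≤
      (5 + Real.eulerMascheroniConstant - 4 * Real.log 2) * x ^ ((3 : ℝ) / 2) := by
  have hγ := Real.one_half_lt_eulerMascheroniConstant
  have hγ' := Real.eulerMascheroniConstant_lt_two_thirds
  have hπ : 0 < Real.log Real.pi := Real.log_pos (by linarith [Real.pi_gt_three])
  have hlower := re_logDeriv_riemannZeta₁_two_ge hRH
  have hupper := re_logDeriv_riemannZeta₁_two_le
  have hxpow : x ≤ x ^ ((3 : ℝ) / 2) := Real.self_le_rpow_of_one_le hx (by norm_num)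
  have hlinear : |(1 + Real.log Real.pi) * x - (1 / 2 + Real.eulerMascheroniConstant +
      Real.log Real.pi - (logDeriv riemannZeta₁ 2).re)| ≤
      (1 + Real.log Real.pi) * x ^ ((3 : ℝ) / 2) := by
    have hle : (1 + Real.log Real.pi) * x ≤ (1 + Real.log Real.pi) * x ^ ((3 : ℝ) / 2) := by gcongr
    have hge : 1 + Real.log Real.pi ≤ (1 + Real.log Real.pi) * x :=
      le_mul_of_one_le_right (by positivity) hx
    rw [abs_le]
    constructor <;> linarith
  rw [abs_sub_comm]
  refine (sub_le_iff_le_add.1 ((abs_sub_abs_le_abs_sub _ _).trans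
    (abs_half_sq_sub_chebyshevPsi1_sub_le hRH hx))).trans ?_
  linarith

end ExplicitFormula

end

theorem psi1_bound_of_rh (hRH : RH) :
    ∀ x : ℝ, 1 ≤ x →
      |chebyshevPsi1 x - x ^ 2 / 2| ≤ (4 + Real.eulerMascheroniConstant) * x ^ ((3 : ℝ) / 2) ∧
      |chebyshevPsi1 x - x ^ 2 / 2| < 5 * x ^ ((3 : ℝ) / 2) := by
  intro x hx
  have hbound := abs_chebyshevPsi1_sub_half_sq_le hRH hx
  have hpos : 0 < x ^ ((3 : ℝ) / 2) := by positivity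
  have hγ := Real.eulerMascheroniConstant_lt_two_thirds
  have hlog := Real.log_two_gt_d9
  constructor
  · exact hbound.trans (mul_le_mul_of_nonneg_right (by linarith) hpos.le)
  · exact hbound.trans_lt (mul_lt_mul_of_pos_right (by linarith) hpos)
end

section
/- If |ψ₁(x) − x²/2| ≤ 9·x^{3/2} for all real x ≥ 1, then the Riemann zeta function has no zeros s with 1/2 < Re s < 1; consequently, the Riemann hypothesis holds. -/
/-!
Let `ζ₁(s) = (s - 1) ζ(s)`, an entire function, and `E(x) = ψ₁(x) - x² / 2`. For `Re s > 1`,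
integrating by parts in `-ζ'(s) / ζ(s) = s ∫₁^∞ ψ(t) t^(-s-1) dt` gives `ζ₁' = g ζ₁` with
`g(s) = -(1 + s (1/2 + (s + 1) ∫₁^∞ E(t) t^(-s-2) dt))`. If `E(x) = O(x^(θ+1))`, then `g` is
holomorphic on `Re s > θ`, and so `ζ₁' = g ζ₁` persists there. A solution of this linear equation
that vanishes at one point of the half-plane vanishes identically, which `ζ₁` does not. With `θ`
tending to `1/2` this clears the right half of the critical strip, and the functional equation
reflects the left half onto it.
-/

open Asymptotics Filter MeasureTheory Set Topology

section LinearODE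

variable {𝕜 : Type*} [NontriviallyNormedField 𝕜] [CharZero 𝕜] [CompleteSpace 𝕜] {f g : 𝕜 → 𝕜}

-- At a zero of `f` of finite order `n`, `f'` has order `n - 1` but `g f` has order at least `n`.
theorem eventuallyEq_zero_of_deriv_eventuallyEq_mul {z : 𝕜} (hf : AnalyticAt 𝕜 f z)
    (hg : AnalyticAt 𝕜 g z) (hODE : deriv f =ᶠ[𝓝 z] g * f) (hz : f z = 0) : f =ᶠ[𝓝 z] 0 := by
  have horder_deriv : analyticOrderAt (deriv f) z + 1 = analyticOrderAt f z := by
    simpa [hz] using hf.analyticOrderAt_deriv_add_one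
  have horder_le : analyticOrderAt f z ≤ analyticOrderAt (deriv f) z := by
    rw [analyticOrderAt_congr hODE, analyticOrderAt_mul hg hf]
    exact le_add_self
  have hderiv_top : analyticOrderAt (deriv f) z = ⊤ := by
    by_contra hne
    exact ((ENat.add_one_le_iff hne).1 (horder_deriv.le.trans horder_le)).false
  rw [hderiv_top, top_add] at horder_deriv
  exact analyticOrderAt_eq_top.1 horder_deriv.symm

theorem ne_zero_of_deriv_eventuallyEq_mul {U : Set 𝕜} (hf : AnalyticOnNhd 𝕜 f U)
    (hg : AnalyticOnNhd 𝕜 g U) (hUo : IsOpen U) (hUc : IsPreconnected U) {w : 𝕜} (hw : w ∈ U)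
    (hODE : deriv f =ᶠ[𝓝 w] g * f) (hfw : f w ≠ 0) {z : 𝕜} (hz : z ∈ U) : f z ≠ 0 := by
  intro hfz
  have hODE_U : EqOn (deriv f) (g * f) U :=
    hf.deriv.eqOn_of_preconnected_of_eventuallyEq (hg.mul hf) hUc hw hODE
  have hf_near : f =ᶠ[𝓝 z] 0 :=
    eventuallyEq_zero_of_deriv_eventuallyEq_mul (hf z hz) (hg z hz)
      (hODE_U.eventuallyEq_of_mem (hUo.mem_nhds hz)) hfz
  exact hfw (hf.eqOn_zero_of_preconnected_of_eventuallyEq_zero hUc hz hf_near hw)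

end LinearODE

theorem isBigO_rpow_rpow_atTop_of_le {a b : ℝ} (hab : a ≤ b) :
    (fun x : ℝ ↦ x ^ a) =O[atTop] fun x ↦ x ^ b := by
  refine .of_norm_eventuallyLE ?_
  filter_upwards [eventually_ge_atTop 1] with x hx
  rw [Real.norm_of_nonneg (by positivity)]
  exact Real.rpow_le_rpow_of_exponent_le hx hab

section MellinTail

variable {f F : ℝ → ℂ} {a b : ℝ} {z : ℂ}

theorem continuousOn_Ici_ofReal_cpow_const (ha : 0 < a) (z : ℂ) :
    ContinuousOn (fun t : ℝ ↦ (t : ℂ) ^ z) (Ici a) := fun _ ht ↦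
  (Complex.continuousAt_ofReal_cpow_const _ _
    (Or.inr (ha.trans_le ht).ne')).continuousWithinAt

theorem isBigO_ofReal_cpow_rpow_atTop (z : ℂ) :
    (fun t : ℝ ↦ (t : ℂ) ^ z) =O[atTop] fun t ↦ t ^ z.re :=
  (Complex.norm_ofReal_cpow_eventually_eq_atTop z).isBigO.of_norm_left

theorem isBigO_mul_ofReal_cpow (hf : f =O[atTop] fun t ↦ t ^ b) (z : ℂ) :
    (fun t ↦ f t * (t : ℂ) ^ z) =O[atTop] fun t ↦ t ^ (b + z.re) :=
  hf.mul_atTop_rpow_of_isBigO_rpow b z.re _ (isBigO_ofReal_cpow_rpow_atTop z) le_rfl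

theorem integrableOn_Ioi_mul_cpow_of_isBigO (ha : 0 < a) (hf : LocallyIntegrableOn f (Ici a))
    (hfO : f =O[atTop] fun t ↦ t ^ b) (hz : b + z.re < -1) :
    IntegrableOn (fun t ↦ f t * (t : ℂ) ^ z) (Ioi a) := by
  have hloc : LocallyIntegrableOn (fun t ↦ f t * (t : ℂ) ^ z) (Ici a) :=
    hf.mul_continuousOn (continuousOn_Ici_ofReal_cpow_const ha z) isClosed_Ici.isLocallyClosed
  exact (hloc.integrableOn_of_isBigO_atTop (isBigO_mul_ofReal_cpow hfO z)
    (integrableAtFilter_rpow_atTop_iff.2 hz)).mono_set Ioi_subset_Ici_self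

theorem mellin_indicator_Ioi (ha : 0 ≤ a) (z : ℂ) :
    mellin ((Ioi a).indicator f) (z + 1) = ∫ t in Ioi a, f t * (t : ℂ) ^ z := by
  have hind (t : ℝ) : (t : ℂ) ^ (z + 1 - 1) • (Ioi a).indicator f t =
      (Ioi a).indicator (fun t ↦ f t * (t : ℂ) ^ z) t := by
    rw [add_sub_cancel_right, smul_eq_mul, mul_comm, indicator_mul_left]
  simp only [mellin, hind]
  rw [setIntegral_indicator measurableSet_Ioi, Ioi_inter_Ioi, sup_eq_right.2 ha]

theorem locallyIntegrable_indicator_Ioi (hf : LocallyIntegrableOn f (Ici a)) :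
    LocallyIntegrable ((Ioi a).indicator f) := by
  refine locallyIntegrable_iff.2 fun K hK ↦ ?_
  rw [integrableOn_indicator_iff measurableSet_Ioi]
  exact (hf.integrableOn_compact_subset inter_subset_left (hK.inter_left isClosed_Ici)).mono_set
    (inter_subset_inter_left K Ioi_subset_Ici_self)

theorem differentiableAt_integral_Ioi_mul_cpow (ha : 0 < a)
    (hf : LocallyIntegrableOn f (Ici a)) (hfO : f =O[atTop] fun t ↦ t ^ b)
    (hz : b + z.re < -1) :
    DifferentiableAt ℂ (fun z : ℂ ↦ ∫ t in Ioi a, f t * (t : ℂ) ^ z) z := by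
  have hzero : (Ioi a).indicator f =ᶠ[𝓝[>] 0] 0 := by
    filter_upwards [Ioo_mem_nhdsGT ha] with t ht
    exact indicator_of_notMem (notMem_Ioi.2 ht.2.le) f
  have htop : (Ioi a).indicator f =ᶠ[atTop] f := by
    filter_upwards [Ioi_mem_atTop a] with t ht using indicator_of_mem ht f
  have hmellin : DifferentiableAt ℂ (mellin ((Ioi a).indicator f)) (z + 1) := by
    refine mellin_differentiableAt_of_isBigO_rpow (a := -b) (b := z.re)
      ((locallyIntegrable_indicator_Ioi hf).locallyIntegrableOn _) ?_ ?_ ?_ ?_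
    · simpa using htop.trans_isBigO hfO
    · simp only [Complex.add_re, Complex.one_re]
      linarith
    · exact hzero.trans_isBigO (isBigO_zero _ _)
    · simp
  have hshift : DifferentiableAt ℂ (fun z : ℂ ↦ z + 1) z := by fun_prop
  simpa only [Function.comp_def, mellin_indicator_Ioi ha.le] using hmellin.comp z hshift

theorem hasDerivAt_ofReal_cpow_const_of_pos {x : ℝ} (hx : 0 < x) (z : ℂ) :
    HasDerivAt (fun t : ℝ ↦ (t : ℂ) ^ z) (z * (x : ℂ) ^ (z - 1)) x := by
  simpa using ((hasDerivAt_id (x : ℂ)).cpow_const (Complex.ofReal_mem_slitPlane.2 hx)).comp_ofReal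

theorem intervalIntegral_mul_cpow_of_hasDerivWithinAt (ha : 0 < a) (hab : a ≤ b)
    (hF : ContinuousOn F (Icc a b))
    (hderiv : ∀ x ∈ Ioo a b, HasDerivWithinAt F (f x) (Ioi x) x)
    (hf : IntervalIntegrable f volume a b) (z : ℂ) :
    ∫ t in a..b, f t * (t : ℂ) ^ z =
      F b * (b : ℂ) ^ z - F a * (a : ℂ) ^ z - z * ∫ t in a..b, F t * (t : ℂ) ^ (z - 1) := by
  have hcpow (w : ℂ) : ContinuousOn (fun t : ℝ ↦ (t : ℂ) ^ w) (uIcc a b) :=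
    (continuousOn_Ici_ofReal_cpow_const ha w).mono (uIcc_of_le hab ▸ Icc_subset_Ici_self)
  have hparts := intervalIntegral.integral_mul_deriv_eq_deriv_mul_of_hasDeriv_right
    (uIcc_of_le hab ▸ hF) (hcpow z) (by simpa [hab] using hderiv)
    (fun x hx ↦ (hasDerivAt_ofReal_cpow_const_of_pos
      (ha.trans (by simpa [hab] using hx.1)) z).hasDerivWithinAt)
    hf ((hcpow (z - 1)).const_mul z |>.intervalIntegrable)
  simp only [mul_left_comm _ z, intervalIntegral.integral_const_mul] at hparts
  linear_combination hparts

theorem integral_Ioi_mul_cpow_of_hasDerivWithinAt (ha : 0 < a) (hF : ContinuousOn F (Ici a))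
    (hderiv : ∀ x ∈ Ioi a, HasDerivWithinAt F (f x) (Ioi x) x)
    (hf : LocallyIntegrableOn f (Ici a))
    (hfz : IntegrableOn (fun t ↦ f t * (t : ℂ) ^ z) (Ioi a))
    (hFO : F =O[atTop] fun t ↦ t ^ b) (hz : b + z.re < 0) :
    ∫ t in Ioi a, f t * (t : ℂ) ^ z =
      -(F a * (a : ℂ) ^ z) - z * ∫ t in Ioi a, F t * (t : ℂ) ^ (z - 1) := by
  have hFz : IntegrableOn (fun t ↦ F t * (t : ℂ) ^ (z - 1)) (Ioi a) :=
    integrableOn_Ioi_mul_cpow_of_isBigO ha (hF.locallyIntegrableOn measurableSet_Ici) hFO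
      (by simp only [Complex.sub_re, Complex.one_re]; linarith)
  have hboundary : Tendsto (fun x : ℝ ↦ F x * (x : ℂ) ^ z) atTop (𝓝 0) := by
    refine (isBigO_mul_ofReal_cpow hFO z).trans_tendsto ?_
    simpa using tendsto_rpow_neg_atTop (neg_pos.2 hz)
  have hlim := ((hboundary.sub_const (F a * (a : ℂ) ^ z)).sub
    ((intervalIntegral_tendsto_integral_Ioi a hFz tendsto_id).const_mul z))
  rw [zero_sub] at hlim
  refine tendsto_nhds_unique (intervalIntegral_tendsto_integral_Ioi a hfz tendsto_id)
    (hlim.congr' ?_)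
  filter_upwards [eventually_ge_atTop a] with x hx
  have hfi : IntervalIntegrable f volume a x :=
    (hf.integrableOn_compact_subset (uIcc_of_le hx ▸ Icc_subset_Ici_self)
      isCompact_uIcc).intervalIntegrable
  exact (intervalIntegral_mul_cpow_of_hasDerivWithinAt ha hx (hF.mono Icc_subset_Ici_self)
    (fun y hy ↦ hderiv y hy.1) hfi z).symm

end MellinTail

theorem chebyshevPsi_eq_psi : chebyshevPsi = Chebyshev.psi := rfl

theorem monotone_chebyshevPsi : Monotone chebyshevPsi :=
  chebyshevPsi_eq_psi ▸ Chebyshev.psi_mono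

theorem isBigO_chebyshevPsi_id : chebyshevPsi =O[atTop] (id : ℝ → ℝ) := by
  refine .of_bound (Real.log 4 + 4) ?_
  filter_upwards [eventually_ge_atTop 0] with x hx
  rw [chebyshevPsi_eq_psi, id, Real.norm_of_nonneg (Chebyshev.psi_nonneg x),
    Real.norm_of_nonneg hx]
  exact Chebyshev.psi_le_const_mul_self hx

theorem continuousWithinAt_chebyshevPsi_Ioi (x : ℝ) :
    ContinuousWithinAt chebyshevPsi (Ioi x) x := by
  refine tendsto_const_nhds.congr' ?_
  filter_upwards [Ioo_mem_nhdsGT (Nat.lt_floor_add_one x)] with y hy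
  have hfloor : ⌊y⌋₊ = ⌊x⌋₊ :=
    le_antisymm (Nat.lt_succ_iff.1 <| (Nat.floor_lt' (Nat.succ_ne_zero _)).2 <| by
      exact_mod_cast hy.2) (Nat.floor_mono hy.1.le)
  rw [chebyshevPsi, chebyshevPsi, hfloor]

theorem continuous_chebyshevPsi1 : Continuous chebyshevPsi1 :=
  intervalIntegral.continuous_primitive (fun _ _ ↦ monotone_chebyshevPsi.intervalIntegrable) 1

theorem hasDerivWithinAt_chebyshevPsi1 (x : ℝ) :
    HasDerivWithinAt chebyshevPsi1 (chebyshevPsi x) (Ioi x) x :=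
  (intervalIntegral.integral_hasDerivWithinAt_right (s := Ici x) (t := Ioi x)
    monotone_chebyshevPsi.intervalIntegrable
    monotone_chebyshevPsi.measurable.stronglyMeasurable.stronglyMeasurableAtFilter
    (continuousWithinAt_chebyshevPsi_Ioi x)).mono Ioi_subset_Ici_self

/-- The error term `ψ₁(x) - x² / 2`, complex-valued because it is only used under Mellin
integrals. -/
noncomputable def chebyshevPsi1Error (x : ℝ) : ℂ := (chebyshevPsi1 x - x ^ 2 / 2 : ℝ)

theorem continuous_chebyshevPsi1Error : Continuous chebyshevPsi1Error :=
  Complex.continuous_ofReal.comp (continuous_chebyshevPsi1.sub (by fun_prop))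

theorem hasDerivWithinAt_chebyshevPsi1Error (x : ℝ) :
    HasDerivWithinAt chebyshevPsi1Error (chebyshevPsi x - x : ℂ) (Ioi x) x := by
  have hsq : HasDerivWithinAt (fun y : ℝ ↦ y ^ 2 / 2) x (Ioi x) x := by
    simpa using ((hasDerivAt_pow 2 x).div_const 2).hasDerivWithinAt
  exact_mod_cast ((hasDerivWithinAt_chebyshevPsi1 x).sub hsq).ofReal_comp

theorem locallyIntegrable_ofReal_chebyshevPsi :
    LocallyIntegrable fun t ↦ (chebyshevPsi t : ℂ) := fun x ↦
  let ⟨U, hU, hψ⟩ := monotone_chebyshevPsi.locallyIntegrable (μ := volume) x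
  ⟨U, hU, hψ.ofReal⟩

theorem isBigO_ofReal_chebyshevPsi :
    (fun t ↦ (chebyshevPsi t : ℂ)) =O[atTop] fun t : ℝ ↦ t ^ (1 : ℝ) := by
  simpa [← isBigO_norm_left] using! isBigO_chebyshevPsi_id

theorem integrableOn_chebyshevPsi_mul_cpow {s : ℂ} (hs : 1 < s.re) :
    IntegrableOn (fun t ↦ (chebyshevPsi t : ℂ) * (t : ℂ) ^ (-(s + 1))) (Ioi 1) :=
  integrableOn_Ioi_mul_cpow_of_isBigO one_pos
    (locallyIntegrable_ofReal_chebyshevPsi.locallyIntegrableOn _) isBigO_ofReal_chebyshevPsi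
    (by simp only [Complex.neg_re, Complex.add_re, Complex.one_re]; linarith)

theorem neg_deriv_riemannZeta_div_eq_mul_integral_chebyshevPsi {s : ℂ} (hs : 1 < s.re) :
    -deriv riemannZeta s / riemannZeta s =
      s * ∫ t in Ioi (1 : ℝ), (chebyshevPsi t : ℂ) * (t : ℂ) ^ (-(s + 1)) := by
  have hO : (fun n : ℕ ↦ ∑ k ∈ Finset.Icc 1 n, ArithmeticFunction.vonMangoldt k) =O[atTop]
      fun n : ℕ ↦ (n : ℝ) ^ (1 : ℝ) := by
    simpa [Function.comp_def, chebyshevPsi] using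
      isBigO_chebyshevPsi_id.comp_tendsto tendsto_natCast_atTop_atTop
  rw [← ArithmeticFunction.LSeries_vonMangoldt_eq_deriv_riemannZeta_div hs,
    LSeries_eq_mul_integral_of_nonneg _ zero_le_one hs hO
      fun _ ↦ ArithmeticFunction.vonMangoldt_nonneg]
  simp only [chebyshevPsi, Complex.ofReal_sum]

theorem integral_chebyshevPsi_sub_self_mul_cpow {s : ℂ} (hs : 1 < s.re) :
    ∫ t in Ioi (1 : ℝ), (chebyshevPsi t - t : ℂ) * (t : ℂ) ^ (-(s + 1)) =
      (∫ t in Ioi (1 : ℝ), (chebyshevPsi t : ℂ) * (t : ℂ) ^ (-(s + 1))) - 1 / (s - 1) := by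
  have hre : (-s).re < -1 := by simpa using hs
  have hmain : ∫ t in Ioi (1 : ℝ), (t : ℂ) ^ (-s) = 1 / (s - 1) := by
    rw [integral_Ioi_cpow_of_lt hre one_pos, Complex.ofReal_one, Complex.one_cpow,
      show -s + 1 = -(s - 1) by ring, neg_div_neg_eq]
  rw [← hmain, ← integral_sub (integrableOn_chebyshevPsi_mul_cpow hs)
    (integrableOn_Ioi_cpow_of_lt hre one_pos)]
  refine setIntegral_congr_fun measurableSet_Ioi fun t ht ↦ ?_
  have ht0 : (t : ℂ) ≠ 0 := Complex.ofReal_ne_zero.2 (one_pos.trans ht).ne'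
  have hcpow : (t : ℂ) * (t : ℂ) ^ (-(s + 1)) = (t : ℂ) ^ (-s) := by
    rw [← show (1 : ℂ) + -(s + 1) = -s by ring, Complex.cpow_add _ _ ht0, Complex.cpow_one]
  simp only [sub_mul, hcpow]

theorem deriv_riemannZeta₁_eq_integral_chebyshevPsi_sub_self {s : ℂ} (hs : 1 < s.re) :
    deriv riemannZeta₁ s =
      -(1 + s * ∫ t in Ioi (1 : ℝ), (chebyshevPsi t - t : ℂ) * (t : ℂ) ^ (-(s + 1))) *
        riemannZeta₁ s := by
  have hs1 : s ≠ 1 := by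
    rintro rfl
    simp at hs
  have hs1' : s - 1 ≠ 0 := sub_ne_zero.2 hs1
  have hlogDeriv := neg_deriv_riemannZeta_div_eq_mul_integral_chebyshevPsi hs
  rw [div_eq_iff (riemannZeta_ne_zero_of_one_lt_re hs), riemannZeta_eq_inv_sub_mul hs1,
    deriv_riemannZeta_eq_neg_inv_sub_sq_mul_add hs1] at hlogDeriv
  rw [integral_chebyshevPsi_sub_self_mul_cpow hs]
  field_simp at hlogDeriv ⊢
  linear_combination -hlogDeriv

theorem integral_chebyshevPsi_sub_self_mul_cpow_eq_integral_error {θ : ℝ} {s : ℂ}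
    (hE : chebyshevPsi1Error =O[atTop] fun x ↦ x ^ (θ + 1))
    (hs : 1 < s.re) (hθ : θ < s.re) :
    ∫ t in Ioi (1 : ℝ), (chebyshevPsi t - t : ℂ) * (t : ℂ) ^ (-(s + 1)) =
      1 / 2 + (s + 1) * ∫ t in Ioi (1 : ℝ), chebyshevPsi1Error t * (t : ℂ) ^ (-(s + 2)) := by
  have hloc : LocallyIntegrable fun t : ℝ ↦ (chebyshevPsi t - t : ℂ) :=
    locallyIntegrable_ofReal_chebyshevPsi.sub Complex.continuous_ofReal.locallyIntegrable
  have hO : (fun t : ℝ ↦ (chebyshevPsi t - t : ℂ)) =O[atTop] fun t ↦ t ^ (1 : ℝ) :=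
    isBigO_ofReal_chebyshevPsi.sub (by simpa using isBigO_ofReal_cpow_rpow_atTop 1)
  have hint : IntegrableOn (fun t : ℝ ↦ (chebyshevPsi t - t : ℂ) * (t : ℂ) ^ (-(s + 1)))
      (Ioi 1) :=
    integrableOn_Ioi_mul_cpow_of_isBigO one_pos (hloc.locallyIntegrableOn _) hO
      (by simp only [Complex.neg_re, Complex.add_re, Complex.one_re]; linarith)
  rw [integral_Ioi_mul_cpow_of_hasDerivWithinAt one_pos
    continuous_chebyshevPsi1Error.continuousOn
    (fun x _ ↦ hasDerivWithinAt_chebyshevPsi1Error x)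
    (hloc.locallyIntegrableOn _) hint hE
    (by simp only [Complex.neg_re, Complex.add_re, Complex.one_re]; linarith)]
  have hE1 : chebyshevPsi1Error 1 = -(1 / 2) := by
    simp [chebyshevPsi1Error, chebyshevPsi1]
  rw [hE1, show -(s + 1) - 1 = -(s + 2) by ring, Complex.ofReal_one, Complex.one_cpow]
  ring

/-- The expression for `ζ₁' / ζ₁`, where `ζ₁(s) = (s - 1) ζ(s)`, in terms of `ψ₁(x) - x² / 2`.
A bound `O(x ^ (θ + 1))` for the latter makes it converge, and continue `ζ₁' / ζ₁`, on
`θ < Re s`. -/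
noncomputable def logDerivRiemannZeta₁OfPsi1 (s : ℂ) : ℂ :=
  -(1 + s * (1 / 2 +
    (s + 1) * ∫ t in Ioi (1 : ℝ), chebyshevPsi1Error t * (t : ℂ) ^ (-(s + 2))))

theorem deriv_riemannZeta₁_eq_logDerivRiemannZeta₁OfPsi1_mul {θ : ℝ} {s : ℂ}
    (hE : chebyshevPsi1Error =O[atTop] fun x ↦ x ^ (θ + 1))
    (hs : 1 < s.re) (hθ : θ < s.re) :
    deriv riemannZeta₁ s = logDerivRiemannZeta₁OfPsi1 s * riemannZeta₁ s := by
  rw [deriv_riemannZeta₁_eq_integral_chebyshevPsi_sub_self hs,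
    integral_chebyshevPsi_sub_self_mul_cpow_eq_integral_error hE hs hθ,
    logDerivRiemannZeta₁OfPsi1]

theorem differentiableAt_logDerivRiemannZeta₁OfPsi1 {θ : ℝ} {s : ℂ}
    (hE : chebyshevPsi1Error =O[atTop] fun x ↦ x ^ (θ + 1)) (hθ : θ < s.re) :
    DifferentiableAt ℂ logDerivRiemannZeta₁OfPsi1 s := by
  have hshift : DifferentiableAt ℂ (fun s : ℂ ↦ -(s + 2)) s := by fun_prop
  have hintegral : DifferentiableAt ℂ
      (fun s : ℂ ↦ ∫ t in Ioi (1 : ℝ), chebyshevPsi1Error t * (t : ℂ) ^ (-(s + 2))) s :=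
    (differentiableAt_integral_Ioi_mul_cpow one_pos
      (continuous_chebyshevPsi1Error.locallyIntegrable.locallyIntegrableOn _) hE
      (by simp only [Complex.neg_re, Complex.add_re, Complex.re_ofNat]; linarith)).comp s hshift
  unfold logDerivRiemannZeta₁OfPsi1
  fun_prop

theorem riemannZeta₁_ne_zero_of_isBigO_chebyshevPsi1Error {θ : ℝ} {s : ℂ}
    (hE : chebyshevPsi1Error =O[atTop] fun x ↦ x ^ (θ + 1)) (hs : θ < s.re) :
    riemannZeta₁ s ≠ 0 := by
  have hopen (c : ℝ) : IsOpen {s : ℂ | c < s.re} :=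
    isOpen_lt continuous_const Complex.continuous_re
  obtain ⟨x, hx⟩ := exists_gt (max θ 1)
  obtain ⟨hxθ, hx1⟩ := max_lt_iff.1 hx
  have hζx : riemannZeta x ≠ 0 := riemannZeta_ne_zero_of_one_lt_re (by simpa using hx1)
  have hζ₁x : riemannZeta₁ x ≠ 0 := by
    rw [riemannZeta_eq_inv_sub_mul (by exact_mod_cast hx1.ne')] at hζx
    exact right_ne_zero_of_mul hζx
  refine ne_zero_of_deriv_eventuallyEq_mul (U := {s : ℂ | θ < s.re}) (w := (x : ℂ))
    (differentiable_riemannZeta₁.differentiableOn.analyticOnNhd (hopen θ))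
    (DifferentiableOn.analyticOnNhd (fun z hz ↦
      (differentiableAt_logDerivRiemannZeta₁OfPsi1 hE hz).differentiableWithinAt) (hopen θ))
    (hopen θ) (convex_halfSpace_re_gt θ).isPreconnected (by simpa using hxθ) ?_ hζ₁x hs
  filter_upwards [(hopen θ).mem_nhds (show θ < (x : ℂ).re by simpa using hxθ),
    (hopen 1).mem_nhds (show 1 < (x : ℂ).re by simpa using hx1)] with z hzθ hz1
  exact deriv_riemannZeta₁_eq_logDerivRiemannZeta₁OfPsi1_mul hE hz1 hzθ

theorem riemannZeta_ne_zero_of_isBigO_chebyshevPsi1Error {θ : ℝ} {s : ℂ}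
    (hE : chebyshevPsi1Error =O[atTop] fun x ↦ x ^ (θ + 1)) (hs : θ < s.re) :
    riemannZeta s ≠ 0 := by
  rcases eq_or_ne s 1 with rfl | hs1
  · exact riemannZeta_one_ne_zero
  · rw [riemannZeta_eq_inv_sub_mul hs1]
    exact mul_ne_zero (inv_ne_zero (sub_ne_zero.2 hs1))
      (riemannZeta₁_ne_zero_of_isBigO_chebyshevPsi1Error hE hs)

theorem riemannZeta_one_sub_eq_zero {s : ℂ} (hs0 : 0 < s.re)
    (hs : riemannZeta s = 0) : riemannZeta (1 - s) = 0 := by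
  rw [riemannZeta_one_sub, hs, mul_zero]
  · rintro n rfl
    simp only [Complex.neg_re, Complex.natCast_re, neg_pos] at hs0
    exact hs0.not_ge n.cast_nonneg
  · rintro rfl
    exact riemannZeta_one_ne_zero hs

theorem rh_of_forall_riemannZeta_ne_zero
    (h : ∀ s : ℂ, 1 / 2 < s.re → s.re < 1 → riemannZeta s ≠ 0) : RH := by
  intro s hs hs0 hs1
  refine le_antisymm (not_lt.1 fun hlt ↦ h s hlt hs1 hs) (not_lt.1 fun hlt ↦ ?_)
  exact h (1 - s) (by simp only [Complex.sub_re, Complex.one_re]; linarith)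
    (by simpa using hs0) (riemannZeta_one_sub_eq_zero hs0 hs)

theorem rh_of_psi1_bound_general
    (h : ∀ ε > 0, (fun x ↦ chebyshevPsi1 x - x ^ 2 / 2) =O[atTop] fun x ↦ x ^ ((3 : ℝ) / 2 + ε)) :
    (∀ s : ℂ, 1 / 2 < s.re → s.re < 1 → riemannZeta s ≠ 0) ∧ RH := by
  suffices hne : ∀ s : ℂ, 1 / 2 < s.re → s.re < 1 → riemannZeta s ≠ 0 from
    ⟨hne, rh_of_forall_riemannZeta_ne_zero hne⟩
  intro s hs _
  obtain ⟨θ, hθ, hθs⟩ := exists_between hs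
  have hE : chebyshevPsi1Error =O[atTop] fun x ↦ x ^ (θ + 1) := by
    refine .of_norm_left ?_
    simp only [chebyshevPsi1Error, Complex.norm_real, isBigO_norm_left]
    simpa only [show (3 : ℝ) / 2 + (θ - 1 / 2) = θ + 1 by ring] using h _ (sub_pos.2 hθ)
  exact riemannZeta_ne_zero_of_isBigO_chebyshevPsi1Error hE hθs

theorem rh_of_psi1_bound
    (h : ∀ x : ℝ, 1 ≤ x → |chebyshevPsi1 x - x ^ 2 / 2| ≤ 9 * x ^ ((3 : ℝ) / 2)) :
    (∀ s : ℂ, 1 / 2 < s.re → s.re < 1 → riemannZeta s ≠ 0) ∧ RH := by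
  have hE : (fun x ↦ chebyshevPsi1 x - x ^ 2 / 2) =O[atTop] fun x ↦ x ^ ((3 : ℝ) / 2) :=
    .of_bound 9 <| (eventually_ge_atTop 1).mono fun x hx ↦ (h x hx).trans <| by
      gcongr; exact le_abs_self _
  exact rh_of_psi1_bound_general fun ε hε ↦
    hE.trans (isBigO_rpow_rpow_atTop_of_le (le_add_of_nonneg_right hε.le))
end
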